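/- Suppose μ_r is a simple eigenvalue of Σ. Then b_r(Σ) = −A_r(Σ)/(2n) + β_r, where A_r(Σ) := 2∑_{s≠r} μ_r μ_s m_s/(μ_r − μ_s)², and the remainder satisfies |β_r| ≤ C (‖Σ‖³/g_r³)(√(r(Σ)/n) ∨ r(Σ)/n)³ for an absolute constant C > 0. -/

import Mathlib

open MeasureTheory ProbabilityTheory Filter Set
open scoped RealInnerProductSpace Topology NNReal ENNReal

noncomputable section

namespace KLN

variable {H : Type*} [NormedAddCommGroup H] [InnerProductSpace ℝ H] [CompleteSpace H]

/-- Rank-one operator `x ⊗ y : w ↦ ⟪y, w⟫ • x`. -/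
def outer (x y : H) : H →L[ℝ] H := (innerSL ℝ y).smulRight x

/-- Sample covariance of the sample `X`. -/
def sampleCov {n : ℕ} (X : Fin n → H) : H →L[ℝ] H :=
  (n : ℝ)⁻¹ • ∑ j : Fin n, outer (X j) (X j)

/-- Courant–Fischer: `lam A j` is the `(j+1)`-th largest eigenvalue of the
positive self-adjoint compact operator `A` (eigenvalues repeated with multiplicity). -/
def lam (A : H →L[ℝ] H) (j : ℕ) : ℝ :=
  ⨆ V : {V : Submodule ℝ H // Module.finrank ℝ V = j + 1},
    ⨅ x : {x : H // x ∈ V.1 ∧ ‖x‖ = 1}, ⟪A x.1, x.1⟫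

/-- `λ_δ(A) := max {λ ∈ A : (λ-δ, λ) ∩ A = ∅}`. -/
def lamDelta (δ : ℝ) (A : Set ℝ) : ℝ := sSup {l | l ∈ A ∧ Ioo (l - δ) l ∩ A = ∅}

/-- Top δ-cluster `T_δ(A) := A \ [0, λ_δ(A))`. -/
def topCluster (δ : ℝ) (A : Set ℝ) : Set ℝ := A \ Ico 0 (lamDelta δ A)

/-- Successive residual sets after removing top clusters. -/
def resid (δ : ℝ) (A : Set ℝ) : ℕ → Set ℝ
  | 0 => A
  | k + 1 => resid δ A k \ topCluster δ (resid δ A k)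

/-- `cluster δ A k` is the `(k+1)`-th δ-cluster `A_{k+1}` of `A`. -/
def cluster (δ : ℝ) (A : Set ℝ) (k : ℕ) : Set ℝ := topCluster δ (resid δ A k)

/-- The number of δ-clusters: `ν := min {j : A_{j+1} = ∅}`. -/
def nClusters (δ : ℝ) (A : Set ℝ) : ℕ := sInf {j | cluster δ A j = ∅}

/-- `σ(A) ∪ {0}`. -/
def spec0 (A : H →L[ℝ] H) : Set ℝ := spectrum ℝ A ∪ {0}

/-- Direct sum of the eigenspaces of `A` for eigenvalues in `c`. -/
def clusterSpace (A : H →L[ℝ] H) (c : Set ℝ) : Submodule ℝ H :=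
  ⨆ t ∈ c, Module.End.eigenspace (A : H →ₗ[ℝ] H) t

/-- `A` is self-adjoint, positive and nuclear (trace class). -/
def IsPosNuclear (A : H →L[ℝ] H) : Prop :=
  (∀ x y : H, ⟪A x, y⟫ = ⟪x, A y⟫) ∧ (∀ x : H, 0 ≤ ⟪A x, x⟫) ∧
    ∃ (ι : Type) (e : HilbertBasis ι ℝ H), Summable fun i => ⟪A (e i), e i⟫

/-- Nuclear norm of a self-adjoint `A`: `‖A‖₁ = ∑_j √(λ_j(A∘A))`. -/
def nuclearNormSA (A : H →L[ℝ] H) : ℝ := ∑' j, Real.sqrt (lam (A.comp A) j)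

/-- A covariance operator together with its spectral decomposition
`Σ = ∑_s μ_s P_s` where `μ 0 > μ 1 > ⋯ > 0` are the distinct eigenvalues (0-indexed;
zero projections `P s = 0` are allowed so that finite rank operators are covered)
and `P s` are the (finite rank, mutually orthogonal) spectral projections. -/
structure CovOp (H : Type*) [NormedAddCommGroup H] [InnerProductSpace ℝ H]
    [CompleteSpace H] where
  toCLM : H →L[ℝ] H
  μ : ℕ → ℝ
  P : ℕ → H →L[ℝ] H
  μ_pos : ∀ s, 0 < μ s
  μ_anti : StrictAnti μ
  μ_lim : Tendsto μ atTop (nhds 0)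
  P_symm : ∀ s (x y : H), ⟪P s x, y⟫ = ⟪x, P s y⟫
  P_idem : ∀ s (x : H), P s (P s x) = P s x
  P_orth : ∀ s t, s ≠ t → ∀ x : H, P s (P t x) = 0
  P_finrank : ∀ s, FiniteDimensional ℝ (LinearMap.range (P s).toLinearMap)
  μm_summable : Summable fun s =>
    μ s * (Module.finrank ℝ (LinearMap.range (P s).toLinearMap) : ℝ)
  decomp : ∀ x : H, HasSum (fun s => μ s • P s x) (toCLM x)

namespace CovOp

/-- multiplicity `m_s` of `μ s`. -/
def m (S : CovOp H) (s : ℕ) : ℕ :=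
  Module.finrank ℝ (LinearMap.range (S.P s).toLinearMap)

/-- `tr(Σ) = ∑_s μ_s m_s`. -/
def trace (S : CovOp H) : ℝ := ∑' s, S.μ s * (S.m s : ℝ)

/-- effective rank `r(Σ) = tr(Σ)/‖Σ‖`. -/
def effRank (S : CovOp H) : ℝ := S.trace / ‖S.toCLM‖

/-- spectral gap `g_r = dist(μ_r, σ(Σ) \ {μ_r})`. -/
def g (S : CovOp H) (r : ℕ) : ℝ :=
  Metric.infDist (S.μ r) (spectrum ℝ S.toCLM \ {S.μ r})

/-- `ḡ_r = min_{s ≤ r} g_s`. -/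
def gbar (S : CovOp H) (r : ℕ) : ℝ := ⨅ s : Fin (r + 1), S.g s

/-- `C_r x = ∑_{s ≠ r} (μ_r - μ_s)⁻¹ P_s x`. -/
def C (S : CovOp H) (r : ℕ) (x : H) : H :=
  ∑' s, (if s = r then 0 else (S.μ r - S.μ s)⁻¹) • S.P s x

/-- `σ_r²(Σ; u) = μ_r ⟨Σ C_r u, C_r u⟩`. -/
def sigmaSq (S : CovOp H) (r : ℕ) (u : H) : ℝ :=
  S.μ r * ⟪S.toCLM (S.C r u), S.C r u⟫

/-- `Δ_r = {j : λ_j(Σ) = μ_r}` (eigenvalues `λ_j` with multiplicities, 0-indexed). -/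
def Delta (S : CovOp H) (r : ℕ) : Set ℕ := {j | lam S.toCLM j = S.μ r}

/-- `μ r` is a simple eigenvalue with (unit) eigenvector `θ`, i.e. `P r = θ ⊗ θ`. -/
def SimpleVec (S : CovOp H) (r : ℕ) (θ : H) : Prop :=
  ‖θ‖ = 1 ∧ ∀ x : H, S.P r x = ⟪θ, x⟫ • θ

/-- `L_r(E) x = P_r E C_r x + C_r E P_r x`, with `P_r = θ ⊗ θ`. -/
def L (S : CovOp H) (r : ℕ) (θ : H) (E : H →L[ℝ] H) (x : H) : H :=
  ⟪θ, E (S.C r x)⟫ • θ + S.C r (E (⟪θ, x⟫ • θ))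

/-- the class `𝒮^{(r)}(rk, a, s0, u)`. -/
def memS (S : CovOp H) (r : ℕ) (u : H) (rk a s0 : ℝ) : Prop :=
  S.effRank ≤ rk ∧ ‖S.toCLM‖ / S.gbar r ≤ a ∧ s0 ^ 2 ≤ S.sigmaSq r u

/-- the open class `𝒮̊^{(r)}(rk, a, s0, u)`. -/
def memSo (S : CovOp H) (r : ℕ) (u : H) (rk a s0 : ℝ) : Prop :=
  S.effRank < rk ∧ ‖S.toCLM‖ / S.gbar r < a ∧ s0 ^ 2 < S.sigmaSq r u

/-- `A_r(Σ) = 2 ∑_{s ≠ r} μ_r μ_s m_s / (μ_r - μ_s)²`. -/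
def Ar (S : CovOp H) (r : ℕ) : ℝ :=
  2 * ∑' s, (if s = r then 0 else S.μ r * S.μ s * (S.m s : ℝ) / (S.μ r - S.μ s) ^ 2)

end CovOp

/-- `ν` is a centered Gaussian measure on `H` with covariance operator `A`. -/
def IsGaussian [MeasurableSpace H] (ν : Measure H) (A : H →L[ℝ] H) : Prop :=
  IsProbabilityMeasure ν ∧
    ∀ u : H, ν.map (fun x => ⟪x, u⟫) = gaussianReal 0 (Real.toNNReal ⟪A u, u⟫)

/-- standard normal distribution function. -/
def Phi (x : ℝ) : ℝ := ((gaussianReal 0 1) (Iic x)).toReal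

/-- `E ℓ(Z)`, `Z` standard normal. -/
def stdGaussExp (f : ℝ → ℝ) : ℝ := ∫ z, f z ∂(gaussianReal 0 1)

/-- Assumption 3.1 on the loss function. -/
structure IsLoss (f : ℝ → ℝ) (c₁ c₂ : ℝ) : Prop where
  c₁_pos : 0 < c₁
  c₂_pos : 0 < c₂
  nonneg : ∀ x, 0 ≤ f x
  zero : f 0 = 0
  even : ∀ x, f (-x) = f x
  mono : MonotoneOn f (Ici 0)
  conv : ConvexOn ℝ (Ici 0) f
  bound : ∀ x, 0 ≤ x → f x ≤ c₁ * Real.exp (c₂ * x)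

/-- the bias parameter `b_r = E⟨θ̂_r, θ_r⟩² - 1` for an estimator `est` based on a
sample of `k` i.i.d. observations from `ν`. -/
def biasParam [MeasurableSpace H] {k : ℕ} (ν : Measure H) (θ : H)
    (est : (Fin k → H) → H) : ℝ :=
  (∫ x, ⟪est x, θ⟫ ^ 2 ∂(Measure.pi fun _ : Fin k => ν)) - 1

/-- `est` is a valid selection of the estimator `θ̂_r^δ` with `δ = τ‖Σ̂‖`: a unit vector,
aligned with `θ`, lying in the direct sum of eigenspaces of `Σ̂` for eigenvalues in the
`r`-th `δ`-cluster of `σ(Σ̂)` (whenever that space is nontrivial). -/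
def clusterSel (r : ℕ) (θ : H) (τ : ℝ) {k : ℕ} (est : (Fin k → H) → H) : Prop :=
  ∀ x : Fin k → H,
    ‖est x‖ = 1 ∧ 0 ≤ ⟪est x, θ⟫ ∧
      (clusterSpace (sampleCov x) (cluster (τ * ‖sampleCov x‖) (spec0 (sampleCov x)) r) ≠ ⊥ →
        est x ∈ clusterSpace (sampleCov x) (cluster (τ * ‖sampleCov x‖) (spec0 (sampleCov x)) r))

/-- `est` is a valid selection of the empirical eigenvector `θ̂_r`: a unit vector, aligned
with `θ`, which is an eigenvector of `Σ̂` for an eigenvalue `λ_j(Σ̂)` with `j ∈ Δ_r`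
(whenever such an eigenvector exists). -/
def eigSel (S : CovOp H) (r : ℕ) (θ : H) {k : ℕ} (est : (Fin k → H) → H) : Prop :=
  ∀ x : Fin k → H,
    ‖est x‖ = 1 ∧ 0 ≤ ⟪est x, θ⟫ ∧
      ((∃ v : H, ‖v‖ = 1 ∧ ∃ j ∈ S.Delta r, sampleCov x v = lam (sampleCov x) j • v) →
        ∃ j ∈ S.Delta r, sampleCov x (est x) = lam (sampleCov x) j • est x)

/-!
Write `E = Σ̂ - Σ`, `θ = θ_r`, `g = g_r`, and let `C` be the reduced resolvent of `Σ` at `μ_r`.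
Weyl's inequality keeps the eigenvalue of `θ̂_r` within `‖E‖` of `μ_r`, and perturbation theory
gives `|⟪θ̂_r, θ⟫ ^ 2 - 1 + ‖C E θ‖ ^ 2| ≤ 16 (‖E‖ / g) ^ 3`, while `𝔼‖C E θ‖ ^ 2` is exactly
`A_r(Σ) / (2 n)`.

The third moment of `‖E‖` is bounded by testing `E` on an auxiliary Gaussian vector `h`, taken in
finitely many coordinates at a time. On the one hand `𝔼_h ⟪E h, h⟫ ^ q ≥ (e⁻⁸ q ‖E‖) ^ q` for even
`q`: the part of `⟪E h, h⟫` that is even in the coordinate of `h` along which `|⟪E u, u⟫|` is nearly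
`‖E‖` is of size `q ‖E‖` with probability at least `e^(-8 q)`. On the other hand, given `h`, the
variable `⟪E h, h⟫` is `⟪Σ h, h⟫` times a centred and normalised chi-square variable with `n`
degrees of freedom. The choice `q ≍ r(Σ)` yields `𝔼‖E‖ ^ 3 ≲ (‖Σ‖ √(r(Σ) / n)) ^ 3`. When
`(‖Σ‖ / g) ^ 2 r(Σ) / n ≥ 1`, the bias and `A_r(Σ) / n` are trivially of the required size.

As `H` may be non-separable, `ν` must be shown to live on the orthogonal complement of `ker Σ`. If
the kernel is nonzero, evaluating the measurable estimator on designed samples compares the indices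
of an orthonormal basis of the kernel, and so makes a well-order on them measurable for the product
of discrete σ-algebras. By Fubini such a well-order carries no nonzero finite measure without atoms,
in particular not the average over `ν` of the squared coordinates along the kernel.
-/

/-! ### Chi-square moments -/

lemma inv_sqrt_one_sub_two_mul_le_exp {t : ℝ} (ht : |t| ≤ 1 / 4) :
    (√(1 - 2 * t))⁻¹ ≤ Real.exp (t + 4 * t ^ 2) := by
  have hle := le_of_abs_le ht
  have hpos : 0 < 1 - 2 * t := by linarith
  have habs : |2 * t| ≤ 1 / 2 := by rw [abs_mul, abs_two]; linarith
  have hlog : -(2 * t + Real.log (1 - 2 * t)) ≤ 8 * t ^ 2 := calc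
    -(2 * t + Real.log (1 - 2 * t)) ≤ |2 * t + Real.log (1 - 2 * t)| := neg_le_abs _
    _ ≤ |2 * t| ^ 2 / (1 - |2 * t|) := by
      simpa using Real.abs_log_sub_add_sum_range_le (habs.trans_lt (by norm_num)) 1
    _ ≤ |2 * t| ^ 2 / (1 / 2) := by gcongr; linarith
    _ = 8 * t ^ 2 := by rw [sq_abs]; ring
  rw [← Real.log_le_iff_le_exp (by positivity), Real.log_inv, Real.log_sqrt hpos.le]
  linarith

lemma gaussianPDFReal_mul_exp_mul_sq (t x : ℝ) :
    gaussianPDFReal 0 1 x * Real.exp (t * x ^ 2) =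
      (√(2 * Real.pi))⁻¹ * Real.exp (-(1 / 2 - t) * x ^ 2) := by
  simp only [gaussianPDFReal, NNReal.coe_one, mul_one, sub_zero]
  rw [mul_assoc, ← Real.exp_add]
  congr 2
  ring

lemma integrable_exp_mul_sq_gaussianReal {t : ℝ} (ht : t < 1 / 2) :
    Integrable (fun x => Real.exp (t * x ^ 2)) (gaussianReal 0 1) := by
  rw [gaussianReal_of_var_ne_zero 0 one_ne_zero,
    integrable_withDensity_iff_integrable_smul' (measurable_gaussianPDF 0 1)
      (ae_of_all _ fun _ => gaussianPDF_lt_top)]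
  simp only [toReal_gaussianPDF, smul_eq_mul, gaussianPDFReal_mul_exp_mul_sq]
  exact (integrable_exp_neg_mul_sq (by linarith)).const_mul _

lemma integral_exp_mul_sq_gaussianReal {t : ℝ} (ht : t < 1 / 2) :
    ∫ x, Real.exp (t * x ^ 2) ∂(gaussianReal 0 1) = (√(1 - 2 * t))⁻¹ := by
  have hquot : Real.pi / (1 / 2 - t) = (2 * Real.pi) * (1 - 2 * t)⁻¹ := by
    have : 1 - 2 * t ≠ 0 := by linarith
    field_simp
  simp only [integral_gaussianReal_eq_integral_smul one_ne_zero, smul_eq_mul,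
    gaussianPDFReal_mul_exp_mul_sq]
  rw [integral_const_mul, integral_gaussian, hquot,
    Real.sqrt_mul (by positivity : 0 ≤ 2 * Real.pi) (1 - 2 * t)⁻¹, Real.sqrt_inv,
    inv_mul_cancel_left₀ (by positivity)]

lemma lintegral_exp_sum_mul_sq_le {ι : Type*} [Fintype ι] {a : ι → ℝ} (ha : ∀ i, |a i| ≤ 1 / 4) :
    ∫⁻ g, ENNReal.ofReal (Real.exp (∑ i, a i * g i ^ 2))
        ∂(Measure.pi fun _ : ι => gaussianReal 0 1) ≤
      ENNReal.ofReal (Real.exp (∑ i, (a i + 4 * a i ^ 2))) := by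
  have hlt : ∀ i, a i < 1 / 2 := fun i => ((abs_le.1 (ha i)).2).trans_lt (by norm_num)
  have hint : Integrable (fun g : ι → ℝ => ∏ i, Real.exp (a i * g i ^ 2))
      (Measure.pi fun _ : ι => gaussianReal 0 1) :=
    Integrable.fintype_prod (f := fun i x => Real.exp (a i * x ^ 2))
      fun i => integrable_exp_mul_sq_gaussianReal (hlt i)
  simp only [Real.exp_sum]
  rw [← ofReal_integral_eq_lintegral_ofReal hint
      (ae_of_all _ fun g => Finset.prod_nonneg fun i _ => (Real.exp_pos _).le),
    integral_fintype_prod_eq_prod (f := fun i x => Real.exp (a i * x ^ 2))]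
  refine ENNReal.ofReal_le_ofReal (Finset.prod_le_prod
    (fun i _ => integral_nonneg fun x => (Real.exp_pos _).le) fun i _ => ?_)
  rw [integral_exp_mul_sq_gaussianReal (hlt i)]
  exact inv_sqrt_one_sub_two_mul_le_exp (ha i)

lemma pow_le_natCast_pow_mul_exp {y : ℝ} (hy : 0 ≤ y) (q : ℕ) :
    y ^ q ≤ (q : ℝ) ^ q * Real.exp y := by
  have hexp := Real.pow_div_factorial_le_exp y hy q
  have hfac : (q.factorial : ℝ) ≤ (q : ℝ) ^ q := by exact_mod_cast Nat.factorial_le_pow q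
  rw [div_le_iff₀ (by positivity), mul_comm] at hexp
  exact hexp.trans (by gcongr)

lemma lintegral_sum_mul_sq_pow_le {ι : Type*} [Fintype ι] {a : ι → ℝ} {B : ℝ} (hB : 0 < B)
    (ha : ∀ i, 0 ≤ a i) (haB : ∀ i, a i ≤ B) {q : ℕ} (hq : ∑ i, a i ≤ B * q) :
    ∫⁻ g, ENNReal.ofReal ((∑ i, a i * g i ^ 2) ^ q) ∂(Measure.pi fun _ : ι => gaussianReal 0 1) ≤
      ENNReal.ofReal ((4 * B * q * Real.exp 1) ^ q) := by
  have hle : ∀ g : ι → ℝ, ENNReal.ofReal ((∑ i, a i * g i ^ 2) ^ q) ≤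
      ENNReal.ofReal ((4 * B * q) ^ q) *
        ENNReal.ofReal (Real.exp (∑ i, a i / (4 * B) * g i ^ 2)) := by
    intro g
    have hnonneg : 0 ≤ ∑ i, a i / (4 * B) * g i ^ 2 := Finset.sum_nonneg fun i _ =>
      mul_nonneg (div_nonneg (ha i) (by positivity)) (sq_nonneg _)
    have hscale : ∑ i, a i * g i ^ 2 = 4 * B * ∑ i, a i / (4 * B) * g i ^ 2 := by
      rw [Finset.mul_sum]
      exact Finset.sum_congr rfl fun i _ => by field_simp
    rw [← ENNReal.ofReal_mul (by positivity), hscale, mul_pow, mul_pow (4 * B), mul_assoc]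
    gcongr
    exact pow_le_natCast_pow_mul_exp hnonneg q
  have hratio : ∀ i, 0 ≤ a i / B ∧ a i / B ≤ 1 := fun i =>
    ⟨div_nonneg (ha i) hB.le, (div_le_one hB).2 (haB i)⟩
  have hquarter : ∀ i, a i / (4 * B) = a i / B / 4 := fun i => by field_simp
  refine (lintegral_mono hle).trans ?_
  rw [lintegral_const_mul _ (by fun_prop), mul_pow _ (Real.exp 1),
    ENNReal.ofReal_mul (by positivity)]
  gcongr
  refine (lintegral_exp_sum_mul_sq_le fun i => ?_).trans ?_
  · rw [hquarter, abs_of_nonneg (by linarith [hratio i])]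
    linarith [hratio i]
  · rw [← Real.exp_nat_mul, mul_one]
    gcongr
    calc ∑ i, (a i / (4 * B) + 4 * (a i / (4 * B)) ^ 2) ≤ ∑ i, a i / B :=
          Finset.sum_le_sum fun i _ => by rw [hquarter]; nlinarith [hratio i]
      _ = (∑ i, a i) / B := (Finset.sum_div ..).symm
      _ ≤ q := (div_le_iff₀' hB).2 hq

lemma pow_le_exp_add_exp_neg {q : ℕ} (hq : Even q) {t : ℝ} (ht : 0 < t) (y : ℝ) :
    y ^ q ≤ (q / t) ^ q * (Real.exp (t * y) + Real.exp (-(t * y))) := by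
  have habs : Real.exp (t * |y|) ≤ Real.exp (t * y) + Real.exp (-(t * y)) := by
    rcases abs_cases y with ⟨h, _⟩ | ⟨h, _⟩ <;> rw [h]
    · linarith [Real.exp_pos (-(t * y))]
    · rw [mul_neg]
      linarith [Real.exp_pos (t * y)]
  calc y ^ q = (t * |y|) ^ q / t ^ q := by rw [mul_pow, hq.pow_abs]; field_simp
    _ ≤ (q : ℝ) ^ q * Real.exp (t * |y|) / t ^ q := by
      gcongr
      exact pow_le_natCast_pow_mul_exp (by positivity) q
    _ = (q / t) ^ q * Real.exp (t * |y|) := by rw [div_pow]; ring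
    _ ≤ _ := by gcongr

lemma lintegral_exp_mul_sum_sq_sub_one_le (n : ℕ) {t : ℝ} (ht : |t| ≤ 1 / 4) :
    ∫⁻ g, ENNReal.ofReal (Real.exp (t * ∑ i, (g i ^ 2 - 1)))
        ∂(Measure.pi fun _ : Fin n => gaussianReal 0 1) ≤
      ENNReal.ofReal (Real.exp (4 * n * t ^ 2)) := by
  have hexp : ∀ g : Fin n → ℝ, Real.exp (t * ∑ i, (g i ^ 2 - 1)) =
      Real.exp (-(n * t)) * Real.exp (∑ i, t * g i ^ 2) := by
    intro g
    rw [← Real.exp_add, ← Finset.mul_sum]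
    congr 1
    simp only [Finset.sum_sub_distrib, Finset.sum_const, Finset.card_univ, Fintype.card_fin,
      nsmul_eq_mul]
    ring
  simp_rw [hexp, ENNReal.ofReal_mul (Real.exp_pos _).le]
  rw [lintegral_const_mul _ (by fun_prop)]
  refine (mul_le_mul_right (lintegral_exp_sum_mul_sq_le fun _ => ht) _).trans (le_of_eq ?_)
  rw [← ENNReal.ofReal_mul (Real.exp_pos _).le, ← Real.exp_add]
  congr 2
  simp only [Finset.sum_const, Finset.card_univ, Fintype.card_fin, nsmul_eq_mul]
  ring

lemma lintegral_sum_sq_sub_one_pow_le (n : ℕ) {q : ℕ} (hq : Even q) {t : ℝ} (ht : 0 < t)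
    (ht4 : t ≤ 1 / 4) :
    ∫⁻ g, ENNReal.ofReal ((∑ i, (g i ^ 2 - 1)) ^ q)
        ∂(Measure.pi fun _ : Fin n => gaussianReal 0 1) ≤
      ENNReal.ofReal ((q / t) ^ q * (2 * Real.exp (4 * n * t ^ 2))) := by
  have ht' : |t| ≤ 1 / 4 := by rwa [abs_of_pos ht]
  calc ∫⁻ g, ENNReal.ofReal ((∑ i, (g i ^ 2 - 1)) ^ q)
        ∂(Measure.pi fun _ : Fin n => gaussianReal 0 1)
      ≤ ∫⁻ g, ENNReal.ofReal ((q / t) ^ q) *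
          (ENNReal.ofReal (Real.exp (t * ∑ i, (g i ^ 2 - 1))) +
            ENNReal.ofReal (Real.exp (-t * ∑ i, (g i ^ 2 - 1))))
          ∂(Measure.pi fun _ : Fin n => gaussianReal 0 1) := by
        refine lintegral_mono fun g => ?_
        rw [← ENNReal.ofReal_add (by positivity) (by positivity),
          ← ENNReal.ofReal_mul (by positivity), neg_mul]
        exact ENNReal.ofReal_le_ofReal (pow_le_exp_add_exp_neg hq ht _)
    _ ≤ ENNReal.ofReal ((q / t) ^ q) * (ENNReal.ofReal (Real.exp (4 * n * t ^ 2)) +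
          ENNReal.ofReal (Real.exp (4 * n * (-t) ^ 2))) := by
        rw [lintegral_const_mul _ (by fun_prop), lintegral_add_left (by fun_prop)]
        gcongr
        exacts [lintegral_exp_mul_sum_sq_sub_one_le n ht',
          lintegral_exp_mul_sum_sq_sub_one_le n (by rwa [abs_neg])]
    _ = ENNReal.ofReal ((q / t) ^ q * (2 * Real.exp (4 * n * t ^ 2))) := by
        rw [neg_sq, ← ENNReal.ofReal_add (by positivity) (by positivity),
          ← ENNReal.ofReal_mul (by positivity), ← two_mul]

lemma lintegral_inv_mul_sum_sq_sub_one_pow_le {n q : ℕ} (hq : Even q) (hq₁ : 1 ≤ q)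
    (hqn : q ≤ 9 * n) :
    ∫⁻ g, ENNReal.ofReal (((n : ℝ)⁻¹ * ∑ i, (g i ^ 2 - 1)) ^ q)
        ∂(Measure.pi fun _ : Fin n => gaussianReal 0 1) ≤
      ENNReal.ofReal ((24 * Real.exp 1 * √(q / n)) ^ q) := by
  have hn : (0 : ℝ) < n := by exact_mod_cast (by omega : 0 < n)
  have : (0 : ℝ) < q := by exact_mod_cast hq₁
  have hqn' : (q : ℝ) ≤ 9 * n := by exact_mod_cast hqn
  set s := √(q / n) with hs
  have hs₀ : 0 < s := Real.sqrt_pos.2 (by positivity)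
  have hs_sq : n * s ^ 2 = q := by rw [hs, Real.sq_sqrt (by positivity)]; field_simp
  have hs₃ : s ≤ 3 := Real.sqrt_le_iff.2 ⟨by norm_num, by rw [div_le_iff₀ hn]; linarith⟩
  have hscale : (q : ℝ) / (s / 12) = n * (12 * s) := by rw [← hs_sq]; field_simp
  have hvar : 4 * n * (s / 12) ^ 2 = q / 36 := by rw [← hs_sq]; ring
  simp_rw [mul_pow (n : ℝ)⁻¹, ENNReal.ofReal_mul (by positivity : 0 ≤ (n : ℝ)⁻¹ ^ q)]
  rw [lintegral_const_mul _ (by fun_prop)]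
  calc ENNReal.ofReal ((n : ℝ)⁻¹ ^ q) * ∫⁻ g, ENNReal.ofReal ((∑ i, (g i ^ 2 - 1)) ^ q)
        ∂(Measure.pi fun _ : Fin n => gaussianReal 0 1)
      ≤ ENNReal.ofReal ((n : ℝ)⁻¹ ^ q) * ENNReal.ofReal ((q / (s / 12)) ^ q *
          (2 * Real.exp (4 * n * (s / 12) ^ 2))) := by
        gcongr
        exact lintegral_sum_sq_sub_one_pow_le n hq (by positivity) (by linarith)
    _ = ENNReal.ofReal ((12 * s) ^ q * (2 * Real.exp (q / 36))) := by
        rw [← ENNReal.ofReal_mul (by positivity), hscale, hvar, mul_pow (n : ℝ), inv_pow,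
          ← mul_assoc, inv_mul_cancel_left₀ (by positivity)]
    _ ≤ ENNReal.ofReal ((12 * s) ^ q * (2 ^ q * Real.exp 1 ^ q)) := by
        gcongr
        · exact le_self_pow₀ one_le_two (by omega)
        · rw [← Real.exp_nat_mul]
          gcongr
          linarith
    _ = _ := by rw [← mul_pow, ← mul_pow]; congr 2; ring

/-! ### Moments of a Gaussian quadratic form from below -/

lemma le_gaussianReal_Icc {q : ℕ} (hq : 1 ≤ q) {a : ℝ} (ha₀ : 0 ≤ a) (ha : a ≤ 2 * √q) :
    ENNReal.ofReal (Real.exp (-8) ^ q) ≤ gaussianReal 0 1 (Icc a (a + 1)) := by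
  have hq' : (1 : ℝ) ≤ q := by exact_mod_cast hq
  have hsq : √(q : ℝ) ^ 2 = q := Real.sq_sqrt (by positivity)
  have : 1 ≤ √(q : ℝ) := Real.one_le_sqrt.2 hq'
  have hnorm : Real.exp (-1) ≤ (√(2 * Real.pi))⁻¹ := by
    rw [Real.exp_neg]
    refine inv_anti₀ (by positivity) ((Real.sqrt_le_left (Real.exp_pos _).le).2 ?_)
    nlinarith [Real.exp_one_gt_d9, Real.pi_lt_d2]
  have hpdf : ∀ x ∈ Icc a (a + 1), ENNReal.ofReal (Real.exp (-8) ^ q) ≤ gaussianPDF 0 1 x := by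
    intro x hx
    have hx2 : x ^ 2 ≤ (2 * √q + 1) ^ 2 :=
      pow_le_pow_left₀ (ha₀.trans hx.1) (by linarith [hx.2]) 2
    refine ENNReal.ofReal_le_ofReal ?_
    simp only [gaussianPDFReal, NNReal.coe_one, mul_one, sub_zero]
    calc Real.exp (-8) ^ q = Real.exp (-1) * Real.exp (-8 * q + 1) := by
          rw [← Real.exp_nat_mul, ← Real.exp_add]
          congr 1
          ring
      _ ≤ (√(2 * Real.pi))⁻¹ * Real.exp (-x ^ 2 / 2) := by
          gcongr
          nlinarith
  rw [gaussianReal_apply 0 one_ne_zero]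
  calc ENNReal.ofReal (Real.exp (-8) ^ q)
      = ∫⁻ _ in Icc a (a + 1), ENNReal.ofReal (Real.exp (-8) ^ q) := by simp
    _ ≤ ∫⁻ x in Icc a (a + 1), gaussianPDF 0 1 x := setLIntegral_mono' measurableSet_Icc hpdf

lemma two_mul_pow_le_add_pow_add_sub_pow {q : ℕ} (hq : Even q) (a b : ℝ) :
    2 * a ^ q ≤ (a + b) ^ q + (a - b) ^ q := by
  have hconv := (hq.convexOn_pow (𝕜 := ℝ)).2 (mem_univ (a + b)) (mem_univ (a - b))
    (show (0 : ℝ) ≤ 1 / 2 by norm_num) (show (0 : ℝ) ≤ 1 / 2 by norm_num) (by norm_num)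
  have hmid : 1 / 2 * (a + b) + 1 / 2 * (a - b) = a := by ring
  simp only [smul_eq_mul, hmid] at hconv
  linarith

lemma lintegral_even_part_pow_le {q : ℕ} (hq : Even q) (l β γ : ℝ) :
    ∫⁻ g, ENNReal.ofReal ((l * g ^ 2 + γ) ^ q) ∂(gaussianReal 0 1) ≤
      ∫⁻ g, ENNReal.ofReal ((l * g ^ 2 + β * g + γ) ^ q) ∂(gaussianReal 0 1) := by
  set f : ℝ → ℝ≥0∞ := fun g => ENNReal.ofReal ((l * g ^ 2 + β * g + γ) ^ q) with hf
  have hfm : Measurable f := by fun_prop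
  have hsymm : ∫⁻ g, f (-g) ∂(gaussianReal 0 1) = ∫⁻ g, f g ∂(gaussianReal 0 1) := by
    rw [← lintegral_map hfm measurable_neg, gaussianReal_map_neg, neg_zero]
  have hpt : ∀ g, 2 * ENNReal.ofReal ((l * g ^ 2 + γ) ^ q) ≤ f g + f (-g) := by
    intro g
    rw [hf, ← ENNReal.ofReal_add (hq.pow_nonneg _) (hq.pow_nonneg _),
      show (2 : ℝ≥0∞) = ENNReal.ofReal 2 by simp, ← ENNReal.ofReal_mul (by norm_num)]
    refine ENNReal.ofReal_le_ofReal ?_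
    convert two_mul_pow_le_add_pow_add_sub_pow hq (l * g ^ 2 + γ) (β * g) using 3 <;> ring
  refine (ENNReal.mul_le_mul_iff_right two_ne_zero ENNReal.ofNat_ne_top).1 ?_
  calc 2 * ∫⁻ g, ENNReal.ofReal ((l * g ^ 2 + γ) ^ q) ∂(gaussianReal 0 1)
      ≤ ∫⁻ g, (f g + f (-g)) ∂(gaussianReal 0 1) := by
        rw [← lintegral_const_mul _ (by fun_prop)]
        exact lintegral_mono hpt
    _ = 2 * ∫⁻ g, f g ∂(gaussianReal 0 1) := by
        rw [lintegral_add_left hfm, hsymm, two_mul]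

-- If `γ` dominates, `g` near `0` works; otherwise `g` near `2 √q` makes the quadratic term win.
lemma exists_forall_Icc_mul_abs_le {q : ℝ} (hq : 1 ≤ q) (l γ : ℝ) :
    ∃ a, 0 ≤ a ∧ a ≤ 2 * √q ∧ ∀ g ∈ Icc a (a + 1), q * |l| ≤ |l * g ^ 2 + γ| := by
  have habs : ∀ g : ℝ, |l * g ^ 2| = |l| * g ^ 2 := fun g => by
    rw [abs_mul, abs_of_nonneg (sq_nonneg g)]
  rcases le_total (2 * q * |l|) |γ| with h | h
  · refine ⟨0, le_rfl, by positivity, fun g hg => ?_⟩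
    have htri := abs_sub_abs_le_abs_add γ (l * g ^ 2)
    have hg1 : g ^ 2 ≤ 1 := by nlinarith [hg.1, hg.2]
    rw [habs, add_comm γ] at htri
    nlinarith [abs_nonneg l]
  · refine ⟨2 * √q, by positivity, le_rfl, fun g hg => ?_⟩
    have htri := abs_sub_abs_le_abs_add (l * g ^ 2) γ
    have hg4 : 4 * q ≤ g ^ 2 := by
      have := pow_le_pow_left₀ (by positivity) hg.1 2
      rwa [mul_pow, Real.sq_sqrt (by linarith), show (2 : ℝ) ^ 2 = 4 by norm_num] at this
    rw [habs] at htri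
    nlinarith [abs_nonneg l]

lemma le_lintegral_quadratic_pow {q : ℕ} (hq : Even q) (hq₁ : 1 ≤ q) (l β γ : ℝ) :
    ENNReal.ofReal ((q * |l| * Real.exp (-8)) ^ q) ≤
      ∫⁻ g, ENNReal.ofReal ((l * g ^ 2 + β * g + γ) ^ q) ∂(gaussianReal 0 1) := by
  obtain ⟨a, ha₀, ha, hle⟩ :=
    exists_forall_Icc_mul_abs_le (show (1 : ℝ) ≤ q by exact_mod_cast hq₁) l γ
  calc ENNReal.ofReal ((q * |l| * Real.exp (-8)) ^ q)
      = ENNReal.ofReal ((q * |l|) ^ q) * ENNReal.ofReal (Real.exp (-8) ^ q) := by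
        rw [mul_pow, ENNReal.ofReal_mul (by positivity)]
    _ ≤ ENNReal.ofReal ((q * |l|) ^ q) * gaussianReal 0 1 (Icc a (a + 1)) := by
        gcongr
        exact le_gaussianReal_Icc hq₁ ha₀ ha
    _ = ∫⁻ _ in Icc a (a + 1), ENNReal.ofReal ((q * |l|) ^ q) ∂(gaussianReal 0 1) := by simp
    _ ≤ ∫⁻ g in Icc a (a + 1), ENNReal.ofReal ((l * g ^ 2 + γ) ^ q) ∂(gaussianReal 0 1) := by
        refine setLIntegral_mono' measurableSet_Icc fun g hg => ENNReal.ofReal_le_ofReal ?_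
        rw [← hq.pow_abs (l * g ^ 2 + γ)]
        exact pow_le_pow_left₀ (by positivity) (hle g hg) q
    _ ≤ ∫⁻ g, ENNReal.ofReal ((l * g ^ 2 + γ) ^ q) ∂(gaussianReal 0 1) :=
        setLIntegral_le_lintegral _ _
    _ ≤ _ := lintegral_even_part_pow_le hq l β γ

section StdGaussian

variable {V : Type*} [NormedAddCommGroup V] [InnerProductSpace ℝ V] [FiniteDimensional ℝ V]
  [MeasurableSpace V] [BorelSpace V]

lemma stdGaussian_prod_map_sub_inner_smul_add (c : V) (hc : ‖c‖ = 1) :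
    ((stdGaussian V).prod (gaussianReal 0 1)).map
      (fun p : V × ℝ => p.1 - ⟪c, p.1⟫ • c + p.2 • c) = stdGaussian V := by
  have hm : Measurable (fun p : V × ℝ => p.1 - ⟪c, p.1⟫ • c + p.2 • c) := by fun_prop
  have := Measure.isProbabilityMeasure_map (μ := (stdGaussian V).prod (gaussianReal 0 1))
    hm.aemeasurable
  refine Measure.ext_of_charFun (funext fun t => ?_)
  have hsplit : ∀ p : V × ℝ,
      Complex.exp (↑⟪p.1 - ⟪c, p.1⟫ • c + p.2 • c, t⟫ * Complex.I) =
        Complex.exp (↑⟪p.1, t - ⟪c, t⟫ • c⟫ * Complex.I) *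
          Complex.exp (↑⟪c, t⟫ * ↑p.2 * Complex.I) := by
    intro p
    rw [← Complex.exp_add]
    congr 1
    simp only [inner_add_left, inner_sub_left, real_inner_smul_left, inner_sub_right,
      real_inner_smul_right, real_inner_comm c p.1]
    push_cast
    ring
  have hnorm : (‖t - ⟪c, t⟫ • c‖ : ℂ) ^ 2 = (‖t‖ : ℂ) ^ 2 - (⟪c, t⟫ : ℂ) ^ 2 := by
    have : ‖t - ⟪c, t⟫ • c‖ ^ 2 = ‖t‖ ^ 2 - ⟪c, t⟫ ^ 2 := by
      rw [norm_sub_sq_real, real_inner_smul_right, norm_smul, hc, real_inner_comm, mul_one,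
        Real.norm_eq_abs, sq_abs]
      ring
    exact_mod_cast this
  rw [charFun_stdGaussian, charFun_apply, integral_map hm.aemeasurable (by fun_prop)]
  simp_rw [hsplit]
  rw [integral_prod_mul (fun x : V => Complex.exp (↑⟪x, t - ⟪c, t⟫ • c⟫ * Complex.I))
    (fun y : ℝ => Complex.exp (↑⟪c, t⟫ * ↑y * Complex.I)), ← charFun_apply, ← charFun_apply_real,
    charFun_stdGaussian, charFun_gaussianReal, ← Complex.exp_add, hnorm]
  congr 1
  push_cast
  ring

lemma le_lintegral_stdGaussian_inner_pow {c : V} (hc : ‖c‖ = 1) (A : V →L[ℝ] V) {q : ℕ}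
    (hq : Even q) (hq₁ : 1 ≤ q) :
    ENNReal.ofReal ((q * |⟪A c, c⟫| * Real.exp (-8)) ^ q) ≤
      ∫⁻ h, ENNReal.ofReal (⟪A h, h⟫ ^ q) ∂(stdGaussian V) := by
  have hm : Measurable (fun p : V × ℝ => p.1 - ⟪c, p.1⟫ • c + p.2 • c) := by fun_prop
  have hf : Measurable fun h : V => ENNReal.ofReal (⟪A h, h⟫ ^ q) := by fun_prop
  rw [← stdGaussian_prod_map_sub_inner_smul_add c hc, lintegral_map hf hm,
    lintegral_prod _ (by exact (hf.comp hm).aemeasurable)]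
  calc ENNReal.ofReal ((q * |⟪A c, c⟫| * Real.exp (-8)) ^ q)
      = ∫⁻ _ : V, ENNReal.ofReal ((q * |⟪A c, c⟫| * Real.exp (-8)) ^ q) ∂(stdGaussian V) := by simp
    _ ≤ _ := lintegral_mono fun h => ?_
  dsimp only
  generalize h - ⟪c, h⟫ • c = w
  refine (le_lintegral_quadratic_pow hq hq₁ _ (⟪A w, c⟫ + ⟪A c, w⟫) ⟪A w, w⟫).trans_eq
    (lintegral_congr fun g => ?_)
  congr 2
  simp only [map_add, map_smul, inner_add_left, inner_add_right, real_inner_smul_left,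
    real_inner_smul_right]
  ring

lemma le_lintegral_stdGaussian_inner_pow_of_norm_le_one {c : V} (hc : ‖c‖ ≤ 1) (A : V →L[ℝ] V)
    {q : ℕ} (hq : Even q) (hq₁ : 1 ≤ q) :
    ENNReal.ofReal ((q * |⟪A c, c⟫| * Real.exp (-8)) ^ q) ≤
      ∫⁻ h, ENNReal.ofReal (⟪A h, h⟫ ^ q) ∂(stdGaussian V) := by
  rcases eq_or_ne c 0 with rfl | hc₀
  · simp [zero_pow (Nat.one_le_iff_ne_zero.1 hq₁)]
  have hnorm : ‖‖c‖⁻¹ • c‖ = 1 := norm_smul_inv_norm hc₀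
  have hscale : |⟪A c, c⟫| = ‖c‖ ^ 2 * |⟪A (‖c‖⁻¹ • c), ‖c‖⁻¹ • c⟫| := by
    rw [map_smul, real_inner_smul_left, real_inner_smul_right, abs_mul, abs_mul, abs_inv,
      abs_norm]
    field_simp
  have hle : |⟪A c, c⟫| ≤ |⟪A (‖c‖⁻¹ • c), ‖c‖⁻¹ • c⟫| := hscale.trans_le <|
    mul_le_of_le_one_left (abs_nonneg _) (pow_le_one₀ (norm_nonneg _) hc)
  refine le_trans ?_ (le_lintegral_stdGaussian_inner_pow hnorm A hq hq₁)
  gcongr ENNReal.ofReal ((_ * ?_ * _) ^ _)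

end StdGaussian

variable {E : Type*} [NormedAddCommGroup E] [InnerProductSpace ℝ E]

/-- The moment `𝔼⟪A ξ, ξ⟫ ^ q` of the random vector `ξ = ∑ i, h i • e i` with independent standard
Gaussian coefficients `h i`. It is `ℝ≥0∞`-valued, so only meaningful for even `q`. -/
def gaussianQuadMoment {ι : Type*} [Fintype ι] (e : ι → E) (A : E →L[ℝ] E) (q : ℕ) : ℝ≥0∞ :=
  ∫⁻ h : ι → ℝ, ENNReal.ofReal (⟪A (∑ i, h i • e i), ∑ i, h i • e i⟫ ^ q)
    ∂(Measure.pi fun _ : ι => gaussianReal 0 1)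

lemma le_gaussianQuadMoment {ι : Type*} [Fintype ι] (e : ι → H) (A : H →L[ℝ] H)
    {c : ι → ℝ} (hc : ∑ i, c i ^ 2 ≤ 1) {q : ℕ} (hq : Even q) (hq₁ : 1 ≤ q) :
    ENNReal.ofReal ((q * |⟪A (∑ i, c i • e i), ∑ i, c i • e i⟫| * Real.exp (-8)) ^ q) ≤
      gaussianQuadMoment e A q := by
  let Φ : EuclideanSpace ℝ ι →L[ℝ] H := ∑ i, (EuclideanSpace.proj i).smulRight (e i)
  let A' : EuclideanSpace ℝ ι →L[ℝ] EuclideanSpace ℝ ι := Φ.adjoint ∘L A ∘L Φ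
  have hΦ : ∀ h, Φ h = ∑ i, h i • e i := fun h => by simp [Φ]
  have hA' : ∀ h, ⟪A' h, h⟫ = ⟪A (∑ i, h i • e i), ∑ i, h i • e i⟫ := fun h => by
    rw [← hΦ, ← ContinuousLinearMap.adjoint_inner_left]
    rfl
  have hm : Measurable fun h => ENNReal.ofReal (⟪A' h, h⟫ ^ q) := by fun_prop
  have hnorm : ‖WithLp.toLp 2 c‖ ≤ 1 := by
    rw [EuclideanSpace.norm_eq]
    simpa using hc
  have hle := le_lintegral_stdGaussian_inner_pow_of_norm_le_one hnorm A' hq hq₁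
  rw [← map_pi_eq_stdGaussian, lintegral_map hm (by fun_prop)] at hle
  simpa only [hA', gaussianQuadMoment] using hle

/-! ### Eigenbases and sample covariance operators -/

lemma exists_seq_tendsto_abs_inner_norm {A : E →L[ℝ] E}
    (hA : ∀ x y, ⟪A x, y⟫ = ⟪x, A y⟫) :
    ∃ u : ℕ → E, (∀ k, ‖u k‖ ≤ 1) ∧ Tendsto (fun k => |⟪A (u k), u k⟫|) atTop (𝓝 ‖A‖) := by
  obtain ⟨s, -, hs, hmem⟩ :=
    exists_seq_tendsto_sSup (range_nonempty _) A.bddAbove_rayleighQuotient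
  choose w hw using hmem
  refine ⟨fun k => ‖w k‖⁻¹ • w k, fun k => ?_, ?_⟩
  · rw [norm_smul, norm_inv, norm_norm]
    exact inv_mul_le_one
  · rw [A.norm_eq_iSup_rayleighQuotient hA, iSup]
    refine hs.congr fun k => ?_
    rw [← hw]
    dsimp only [ContinuousLinearMap.rayleighQuotient]
    rw [ContinuousLinearMap.reApplyInnerSelf_apply, map_smul, real_inner_smul_left,
      real_inner_smul_right]
    congr 1
    simp only [RCLike.re_to_real]
    ring

/-- `e` is an orthonormal basis of eigenvectors of the positive nuclear operator `T`, and `a` lists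
the corresponding eigenvalues, repeated according to multiplicity. -/
structure IsEigenbasis {ι : Type*} (T : E →L[ℝ] E) (e : HilbertBasis ι ℝ E) (a : ι → ℝ) :
    Prop where
  map_eq : ∀ i, T (e i) = a i • e i
  nonneg : ∀ i, 0 ≤ a i
  summable : Summable a

namespace IsEigenbasis

variable {ι : Type*} {T : E →L[ℝ] E} {e : HilbertBasis ι ℝ E} {a : ι → ℝ}

lemma inner_map (h : IsEigenbasis T e a) (i : ι) (x : E) : ⟪e i, T x⟫ = a i * ⟪e i, x⟫ := by
  suffices innerSL ℝ (e i) ∘L T = a i • innerSL ℝ (e i) from DFunLike.congr_fun this x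
  refine ContinuousLinearMap.ext_on
    (Submodule.dense_iff_topologicalClosure_eq_top.2 e.dense_span) ?_
  rintro _ ⟨j, rfl⟩
  rcases eq_or_ne i j with rfl | hij
  · simp [h.map_eq]
  · simp [h.map_eq, e.orthonormal.inner_eq_zero hij]

lemma inner_map_left (h : IsEigenbasis T e a) (x y : E) : ⟪T x, y⟫ = ⟪x, T y⟫ := by
  refine (e.hasSum_inner_mul_inner (T x) y).unique
    ((e.hasSum_inner_mul_inner x (T y)).congr_fun fun i => ?_)
  rw [h.inner_map, real_inner_comm, h.inner_map, real_inner_comm]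
  ring

lemma hasSum_inner_map_self (h : IsEigenbasis T e a) (x : E) :
    HasSum (fun i => a i * ⟪e i, x⟫ ^ 2) ⟪T x, x⟫ := by
  refine (e.hasSum_inner_mul_inner (T x) x).congr_fun fun i => ?_
  rw [real_inner_comm (e i), h.inner_map, real_inner_comm]
  ring

end IsEigenbasis

section SampleCov

variable {n : ℕ}

lemma sampleCov_apply (x : Fin n → E) (u : E) :
    sampleCov x u = (n : ℝ)⁻¹ • ∑ j, ⟪x j, u⟫ • x j := by
  simp [sampleCov, outer]

lemma inner_sampleCov (x : Fin n → E) (u w : E) :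
    ⟪sampleCov x u, w⟫ = (n : ℝ)⁻¹ * ∑ j, ⟪x j, u⟫ * ⟪x j, w⟫ := by
  simp only [sampleCov_apply, real_inner_smul_left, sum_inner]

lemma inner_sampleCov_left (x : Fin n → E) (u w : E) :
    ⟪sampleCov x u, w⟫ = ⟪u, sampleCov x w⟫ := by
  simp only [real_inner_comm _ u, inner_sampleCov, mul_comm]

end SampleCov

lemma gaussianReal_map_sqrt_mul (v : ℝ) :
    (gaussianReal 0 1).map (√v * ·) = gaussianReal 0 v.toNNReal := by
  rw [gaussianReal_map_const_mul, mul_zero, mul_one]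
  congr 1
  ext
  simp [Real.sq_sqrt']

section GaussianSample

variable [MeasurableSpace E] [BorelSpace E] {ν : Measure E} {T : E →L[ℝ] E} {n : ℕ}

lemma IsGaussian.map_pi_inner (hν : IsGaussian ν T) (n : ℕ) (u : E) :
    (Measure.pi fun _ : Fin n => ν).map (fun x j => ⟪x j, u⟫) =
      (Measure.pi fun _ : Fin n => gaussianReal 0 1).map (fun g j => √⟪T u, u⟫ * g j) := by
  have := hν.1
  have hm : Measurable fun x : E => ⟪x, u⟫ := by fun_prop
  have (v : ℝ) : IsProbabilityMeasure ((gaussianReal 0 1).map (√v * ·)) := by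
    rw [gaussianReal_map_sqrt_mul]; infer_instance
  have : IsProbabilityMeasure (ν.map fun x => ⟪x, u⟫) := by rw [hν.2]; infer_instance
  rw [Measure.pi_map_pi (f := fun _ x => ⟪x, u⟫) fun _ => hm.aemeasurable,
    Measure.pi_map_pi (f := fun _ g => √⟪T u, u⟫ * g) fun _ => by fun_prop]
  simp only [hν.2, gaussianReal_map_sqrt_mul]

lemma IsGaussian.lintegral_inner_sampleCov_sub_pow_le (hν : IsGaussian ν T) {q : ℕ} (hq : Even q)
    (hq₁ : 1 ≤ q) (hqn : q ≤ 9 * n) {u : E} (hu : 0 ≤ ⟪T u, u⟫) :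
    ∫⁻ x, ENNReal.ofReal (⟪(sampleCov x - T) u, u⟫ ^ q) ∂(Measure.pi fun _ : Fin n => ν) ≤
      ENNReal.ofReal (⟪T u, u⟫ ^ q) * ENNReal.ofReal ((24 * Real.exp 1 * √(q / n)) ^ q) := by
  have hn : (n : ℝ) ≠ 0 := by exact_mod_cast (by omega : n ≠ 0)
  have hscale : ∀ g : Fin n → ℝ,
      ENNReal.ofReal (((n : ℝ)⁻¹ * ∑ j, (√⟪T u, u⟫ * g j) ^ 2 - ⟪T u, u⟫) ^ q) =
        ENNReal.ofReal (⟪T u, u⟫ ^ q) *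
          ENNReal.ofReal (((n : ℝ)⁻¹ * ∑ j, (g j ^ 2 - 1)) ^ q) := by
    intro g
    rw [← ENNReal.ofReal_mul (by positivity), ← mul_pow]
    congr 2
    simp only [mul_pow, Real.sq_sqrt hu, ← Finset.mul_sum, Finset.sum_sub_distrib,
      Finset.sum_const, Finset.card_univ, Fintype.card_fin, nsmul_eq_mul]
    field_simp
  calc ∫⁻ x, ENNReal.ofReal (⟪(sampleCov x - T) u, u⟫ ^ q) ∂(Measure.pi fun _ : Fin n => ν)
      = ∫⁻ y, ENNReal.ofReal (((n : ℝ)⁻¹ * ∑ j, y j ^ 2 - ⟪T u, u⟫) ^ q)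
          ∂((Measure.pi fun _ : Fin n => ν).map fun x j => ⟪x j, u⟫) := by
        rw [lintegral_map (by fun_prop) (by fun_prop)]
        simp only [sub_apply, inner_sub_left, inner_sampleCov, ← sq]
    _ = ENNReal.ofReal (⟪T u, u⟫ ^ q) *
          ∫⁻ g, ENNReal.ofReal (((n : ℝ)⁻¹ * ∑ j, (g j ^ 2 - 1)) ^ q)
            ∂(Measure.pi fun _ : Fin n => gaussianReal 0 1) := by
        rw [hν.map_pi_inner, lintegral_map (by fun_prop) (by fun_prop)]
        simp only [hscale]
        rw [lintegral_const_mul _ (by fun_prop)]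
    _ ≤ _ := by
        gcongr
        exact lintegral_inv_mul_sum_sq_sub_one_pow_le hq hq₁ hqn

lemma measurable_inner_sampleCov_sub {ι : Type*} [Fintype ι] (e : ι → E) (T : E →L[ℝ] E) :
    Measurable fun p : (Fin n → E) × (ι → ℝ) =>
      ⟪(sampleCov p.1 - T) (∑ i, p.2 i • e i), ∑ i, p.2 i • e i⟫ := by
  have hT : Measurable fun h : ι → ℝ => ⟪T (∑ i, h i • e i), ∑ i, h i • e i⟫ :=
    Continuous.measurable (by fun_prop)
  simp only [sub_apply, inner_sub_left, inner_sampleCov]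
  refine Measurable.sub ?_ (hT.comp measurable_snd)
  simp only [inner_sum, real_inner_smul_right]
  fun_prop

lemma measurable_gaussianQuadMoment_sampleCov_sub {ι : Type*} [Fintype ι] (e : ι → E)
    (T : E →L[ℝ] E) (q : ℕ) :
    Measurable fun x : Fin n → E => gaussianQuadMoment e (sampleCov x - T) q :=
  Measurable.lintegral_prod_right'
    ((measurable_inner_sampleCov_sub e T).pow_const q).ennreal_ofReal

lemma IsGaussian.lintegral_gaussianQuadMoment_sampleCov_sub_le (hν : IsGaussian ν T) {ι : Type*}
    [Fintype ι] {e : ι → E} (he : Orthonormal ℝ e) {a : ι → ℝ} (hT : ∀ i, T (e i) = a i • e i)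
    (ha : ∀ i, 0 ≤ a i) {B : ℝ} (hB : 0 < B) (haB : ∀ i, a i ≤ B) {q : ℕ} (hq : Even q)
    (hq₁ : 1 ≤ q) (hqn : q ≤ 9 * n) (hsum : ∑ i, a i ≤ B * q) :
    ∫⁻ x, gaussianQuadMoment e (sampleCov x - T) q ∂(Measure.pi fun _ : Fin n => ν) ≤
      ENNReal.ofReal ((4 * B * q * Real.exp 1) ^ q) *
        ENNReal.ofReal ((24 * Real.exp 1 * √(q / n)) ^ q) := by
  have := hν.1
  have hdiag : ∀ h : ι → ℝ, ⟪T (∑ i, h i • e i), ∑ i, h i • e i⟫ = ∑ i, a i * h i ^ 2 := by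
    intro h
    simp only [map_sum, map_smul, hT, smul_smul]
    rw [he.inner_sum]
    exact Finset.sum_congr rfl fun i _ => by rw [conj_trivial]; ring
  have hpos : ∀ h : ι → ℝ, 0 ≤ ⟪T (∑ i, h i • e i), ∑ i, h i • e i⟫ := fun h => by
    rw [hdiag]
    exact Finset.sum_nonneg fun i _ => mul_nonneg (ha i) (sq_nonneg _)
  simp only [gaussianQuadMoment]
  rw [lintegral_lintegral_swap
    (by exact (((measurable_inner_sampleCov_sub e T).pow_const q).ennreal_ofReal).aemeasurable)]
  refine (lintegral_mono fun h =>
    hν.lintegral_inner_sampleCov_sub_pow_le hq hq₁ hqn (hpos h)).trans ?_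
  rw [lintegral_mul_const' _ _ ENNReal.ofReal_ne_top]
  simp only [hdiag]
  gcongr
  exact lintegral_sum_mul_sq_pow_le hB ha haB hsum

end GaussianSample

/-! ### The third moment of the sampling error -/

lemma tendsto_inner_map_sum {ι : Type*} (e : HilbertBasis ι ℝ H) {A : H →L[ℝ] H}
    (hA : ∀ x y, ⟪A x, y⟫ = ⟪x, A y⟫) {S : Set ι} (hS : ∀ i ∉ S, A (e i) = 0) (u : H) :
    Tendsto (fun s : Finset S =>
        ⟪A (∑ i : s, ⟪e i, u⟫ • e i), ∑ i : s, ⟪e i, u⟫ • e (i : S)⟫) atTop (𝓝 ⟪A u, u⟫) := by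
  have hu : HasSum (fun i => ⟪e i, u⟫ • e i) u := by
    simpa only [e.repr_apply_apply] using e.hasSum_repr u
  obtain ⟨y, hy⟩ : Summable fun i : S => ⟪e i, u⟫ • e i := hu.summable.subtype S
  have hAu : HasSum ((fun i => ⟪e i, u⟫ • A (e i)) ∘ ((↑) : S → ι)) (A u) := by
    refine (hasSum_subtype_iff_of_support_subset fun i hi => ?_).2
      (by simpa only [map_smul] using hu.mapL A)
    by_contra hiS
    exact hi (by simp only [hS i hiS, smul_zero])
  have hAy : A y = A u := by
    refine HasSum.unique ?_ hAu
    exact (hy.mapL A).congr_fun fun i => (map_smul A _ _).symm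
  have hyu : ⟪A y, y⟫ = ⟪A u, u⟫ := by rw [hAy, hA u y, hAy, ← hA u u]
  rw [← hyu]
  have hcont : Continuous fun y => ⟪A y, y⟫ := by fun_prop
  refine ((hcont.tendsto y).comp hy).congr fun s => ?_
  simp only [Function.comp_apply]
  rw [← Finset.sum_coe_sort s]

lemma le_liminf_gaussianQuadMoment {ι : Type*} (e : HilbertBasis ι ℝ H) {A : H →L[ℝ] H}
    (hA : ∀ x y, ⟪A x, y⟫ = ⟪x, A y⟫) {S : Set ι} (hS : ∀ i ∉ S, A (e i) = 0)
    {F : ℕ → Finset S} (hF : Tendsto F atTop atTop) {q : ℕ} (hq : Even q) (hq₁ : 1 ≤ q) :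
    ENNReal.ofReal ((q * ‖A‖ * Real.exp (-8)) ^ q) ≤
      liminf (fun N => gaussianQuadMoment (fun i : F N => e i) A q) atTop := by
  set φ : ℝ → ℝ≥0∞ := fun s => ENNReal.ofReal ((q * s * Real.exp (-8)) ^ q)
  have hφ : Continuous φ := ENNReal.continuous_ofReal.comp (by fun_prop)
  obtain ⟨u, hu, hlim⟩ := exists_seq_tendsto_abs_inner_norm hA
  refine le_of_tendsto' ((hφ.tendsto _).comp hlim) fun k => ?_
  have hquad := ((hφ.comp continuous_abs).tendsto _).comp
    ((tendsto_inner_map_sum e hA hS (u k)).comp hF)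
  refine hquad.liminf_eq.symm.trans_le (liminf_le_liminf (Eventually.of_forall fun N => ?_))
  refine le_gaussianQuadMoment (fun i : F N => e i) A ?_ hq hq₁
  have horth : Orthonormal ℝ fun i : F N => e (i : S) :=
    e.orthonormal.comp _ (Subtype.val_injective.comp Subtype.val_injective)
  calc ∑ i : F N, ⟪e (i : S), u k⟫ ^ 2 = ∑ i : F N, ‖⟪e (i : S), u k⟫‖ ^ 2 := by
        simp only [Real.norm_eq_abs, sq_abs]
    _ ≤ ‖u k‖ ^ 2 := horth.sum_inner_products_le (u k)
    _ ≤ 1 := pow_le_one₀ (norm_nonneg _) (hu k)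

lemma IsEigenbasis.sampleCov_sub_apply_eq_zero {T : E →L[ℝ] E} {ι : Type*}
    {e : HilbertBasis ι ℝ E} {a : ι → ℝ} (h : IsEigenbasis T e a) {n : ℕ} {x : Fin n → E} {i : ι}
    (hi : a i = 0) (hx : ∀ k, ⟪x k, e i⟫ = 0) : (sampleCov x - T) (e i) = 0 := by
  simp [sampleCov_apply, hx, h.map_eq, hi]

lemma IsGaussian.lintegral_gaussianQuadMoment_comp_le [MeasurableSpace E] [BorelSpace E]
    {ν : Measure E} {T : E →L[ℝ] E} {n : ℕ} {ι : Type*} {e : HilbertBasis ι ℝ E} {a : ι → ℝ}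
    (hν : IsGaussian ν T) (h : IsEigenbasis T e a) {κ : Type*} [Fintype κ] {f : κ → ι}
    (hf : Function.Injective f)
    {B : ℝ} (hB : 0 < B) (haB : ∀ i, a i ≤ B) {q : ℕ} (hq : Even q) (hq₁ : 1 ≤ q)
    (hqn : q ≤ 9 * n) (hsum : ∑' i, a i ≤ B * q) :
    ∫⁻ x, gaussianQuadMoment (fun k => e (f k)) (sampleCov x - T) q
        ∂(Measure.pi fun _ : Fin n => ν) ≤
      ENNReal.ofReal ((q * Real.exp (-8)) ^ q) *
        ENNReal.ofReal ((96 * Real.exp 10 * B * √(q / n)) ^ q) := by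
  refine (hν.lintegral_gaussianQuadMoment_sampleCov_sub_le (e.orthonormal.comp f hf)
    (fun k => h.map_eq _) (fun k => h.nonneg _) hB (fun k => haB _) hq hq₁ hqn ?_).trans_eq ?_
  · refine le_trans ?_ hsum
    exact (Finset.sum_map Finset.univ ⟨f, hf⟩ a).symm.trans_le
      (h.summable.sum_le_tsum _ fun i _ => h.nonneg i)
  · have hexp : Real.exp (-8) * Real.exp 10 = Real.exp 1 * Real.exp 1 := by
      rw [← Real.exp_add, ← Real.exp_add]; norm_num
    rw [← ENNReal.ofReal_mul (by positivity), ← ENNReal.ofReal_mul (by positivity), ← mul_pow,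
      ← mul_pow]
    congr 2
    linear_combination (-96 * q * B * √(q / n)) * hexp

section OpNormMoment

variable [MeasurableSpace H] [BorelSpace H] {ν : Measure H} {T : H →L[ℝ] H} {n : ℕ} {ι : Type*}
  {e : HilbertBasis ι ℝ H} {a : ι → ℝ}

lemma IsGaussian.lintegral_opNorm_sampleCov_sub_pow_le (hν : IsGaussian ν T)
    (h : IsEigenbasis T e a) (hnull : ∀ᵐ x ∂ν, ∀ i, a i = 0 → ⟪x, e i⟫ = 0) {B : ℝ} (hB : 0 < B)
    (haB : ∀ i, a i ≤ B) {q : ℕ} (hq : Even q) (hq₁ : 1 ≤ q) (hqn : q ≤ 9 * n)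
    (hsum : ∑' i, a i ≤ B * q) :
    ∫⁻ x, ENNReal.ofReal (‖sampleCov x - T‖ ^ q) ∂(Measure.pi fun _ : Fin n => ν) ≤
      ENNReal.ofReal ((96 * Real.exp 10 * B * √(q / n)) ^ q) := by
  have := hν.1
  have hnull' : ∀ᵐ x ∂(Measure.pi fun _ : Fin n => ν), ∀ k i, a i = 0 → ⟪x k, e i⟫ = 0 :=
    ae_all_iff.2 fun k => (Measure.tendsto_eval_ae_ae (μ := fun _ => ν) (i := k)).eventually hnull
  have : Countable {i | a i ≠ 0} := h.summable.countable_support.to_subtype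
  obtain ⟨F, hF⟩ := exists_seq_tendsto (atTop : Filter (Finset {i | a i ≠ 0}))
  set c : ℝ := (q * Real.exp (-8)) ^ q
  set W : ℕ → (Fin n → H) → ℝ≥0∞ := fun N x =>
    gaussianQuadMoment (fun i : F N => e i) (sampleCov x - T) q
  have hpt : ∀ᵐ x ∂(Measure.pi fun _ : Fin n => ν),
      ENNReal.ofReal c * ENNReal.ofReal (‖sampleCov x - T‖ ^ q) ≤ liminf (W · x) atTop := by
    filter_upwards [hnull'] with x hx
    rw [← ENNReal.ofReal_mul (by positivity), ← mul_pow, mul_right_comm]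
    refine le_liminf_gaussianQuadMoment e (fun u w => ?_) (fun i hi => ?_) hF hq hq₁
    · simp only [sub_apply, inner_sub_left, inner_sub_right,
        inner_sampleCov_left, h.inner_map_left]
    · have hi : a i = 0 := not_not.1 hi
      exact h.sampleCov_sub_apply_eq_zero hi fun k => hx k i hi
  have hc₀ : ENNReal.ofReal c ≠ 0 := by
    have : (0 : ℝ) < q := by exact_mod_cast hq₁
    rw [ne_eq, ENNReal.ofReal_eq_zero, not_le]
    positivity
  rw [← ENNReal.mul_le_mul_iff_right hc₀ ENNReal.ofReal_ne_top,
    ← lintegral_const_mul' _ _ ENNReal.ofReal_ne_top]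
  calc _ ≤ ∫⁻ x, liminf (W · x) atTop ∂(Measure.pi fun _ : Fin n => ν) := lintegral_mono_ae hpt
    _ ≤ liminf (fun N => ∫⁻ x, W N x ∂(Measure.pi fun _ : Fin n => ν)) atTop :=
            lintegral_liminf_le fun N => measurable_gaussianQuadMoment_sampleCov_sub _ T q
    _ ≤ _ := liminf_le_of_frequently_le' <| Frequently.of_forall fun N =>
            hν.lintegral_gaussianQuadMoment_comp_le h
              (Subtype.val_injective.comp Subtype.val_injective) hB haB hq hq₁ hqn hsum

lemma pow_three_le_mul_one_add_div_pow {δ M : ℝ} (hδ : 0 ≤ δ) (hM : 0 < M) {q : ℕ} (hq : 3 ≤ q) :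
    δ ^ 3 ≤ M ^ 3 * (1 + (δ / M) ^ q) := by
  have hratio : (δ / M) ^ 3 ≤ 1 + (δ / M) ^ q := by
    rcases le_total (δ / M) 1 with hle | hge
    · linarith [pow_le_one₀ (n := 3) (by positivity) hle, pow_nonneg (by positivity : 0 ≤ δ / M) q]
    · linarith [pow_le_pow_right₀ hge hq]
  calc δ ^ 3 = M ^ 3 * (δ / M) ^ 3 := by field_simp
    _ ≤ _ := by gcongr

lemma lintegral_ofReal_pow_three_le {Ω : Type*} [MeasurableSpace Ω] (μ : Measure Ω)
    [IsProbabilityMeasure μ] {X : Ω → ℝ} (hX : ∀ ω, 0 ≤ X ω) {M : ℝ} (hM : 0 < M) {q : ℕ}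
    (hq : 3 ≤ q) (hle : ∫⁻ ω, ENNReal.ofReal (X ω ^ q) ∂μ ≤ ENNReal.ofReal (M ^ q)) :
    ∫⁻ ω, ENNReal.ofReal (X ω ^ 3) ∂μ ≤ ENNReal.ofReal (2 * M ^ 3) := by
  have hpt : ∀ ω, ENNReal.ofReal (X ω ^ 3) ≤
      ENNReal.ofReal (M ^ 3) + ENNReal.ofReal (M ^ 3 / M ^ q) * ENNReal.ofReal (X ω ^ q) := by
    intro ω
    have hXω := hX ω
    rw [← ENNReal.ofReal_mul (by positivity), ← ENNReal.ofReal_add (by positivity) (by positivity)]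
    refine ENNReal.ofReal_le_ofReal
      ((pow_three_le_mul_one_add_div_pow hXω hM hq).trans_eq ?_)
    rw [div_pow]
    ring
  calc ∫⁻ ω, ENNReal.ofReal (X ω ^ 3) ∂μ
      ≤ ENNReal.ofReal (M ^ 3) +
          ENNReal.ofReal (M ^ 3 / M ^ q) * ∫⁻ ω, ENNReal.ofReal (X ω ^ q) ∂μ := by
        refine (lintegral_mono hpt).trans_eq ?_
        rw [lintegral_add_left measurable_const, lintegral_const_mul' _ _ ENNReal.ofReal_ne_top]
        simp
    _ ≤ ENNReal.ofReal (M ^ 3) + ENNReal.ofReal (M ^ 3 / M ^ q) * ENNReal.ofReal (M ^ q) := by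
        gcongr
    _ = ENNReal.ofReal (2 * M ^ 3) := by
        rw [← ENNReal.ofReal_mul (by positivity),
          ← ENNReal.ofReal_add (by positivity) (by positivity)]
        congr 1
        field_simp
        ring

lemma IsGaussian.lintegral_opNorm_sampleCov_sub_pow_three_le (hν : IsGaussian ν T)
    (h : IsEigenbasis T e a) (hnull : ∀ᵐ x ∂ν, ∀ i, a i = 0 → ⟪x, e i⟫ = 0) {B : ℝ} (hB : 0 < B)
    (haB : ∀ i, a i ≤ B) {R : ℝ} (hR : 1 ≤ R) (hRn : R ≤ n) (hsum : ∑' i, a i ≤ B * R) :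
    ∫⁻ x, ENNReal.ofReal (‖sampleCov x - T‖ ^ 3) ∂(Measure.pi fun _ : Fin n => ν) ≤
      ENNReal.ofReal (2 * (288 * Real.exp 10 * B * √(R / n)) ^ 3) := by
  have := hν.1
  have hn : (0 : ℝ) < n := by linarith
  obtain ⟨q, hq, hq₃, hRq, hqR⟩ : ∃ q : ℕ, Even q ∧ 3 ≤ q ∧ R ≤ q ∧ (q : ℝ) ≤ 9 * R := by
    have hceil := Nat.ceil_lt_add_one (by linarith : 0 ≤ R)
    have hpos : 0 < ⌈R⌉₊ := Nat.ceil_pos.2 (by linarith)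
    refine ⟨2 * ⌈R⌉₊ + 2, ⟨⌈R⌉₊ + 1, by ring⟩, by omega, ?_, ?_⟩ <;> push_cast <;>
      linarith [Nat.le_ceil R]
  have hqn : q ≤ 9 * n := by
    have : (q : ℝ) ≤ 9 * n := by linarith
    exact_mod_cast this
  have hsqrt : √(q / n) ≤ 3 * √(R / n) := by
    rw [show (3 : ℝ) = √9 by rw [show (9 : ℝ) = 3 ^ 2 by norm_num, Real.sqrt_sq (by norm_num)],
      ← Real.sqrt_mul (by norm_num), ← mul_div_assoc]
    gcongr
  refine lintegral_ofReal_pow_three_le _ (fun x => norm_nonneg _)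
    (by have : 0 < R := by linarith
        positivity) hq₃
    ((hν.lintegral_opNorm_sampleCov_sub_pow_le h hnull hB haB hq (by omega) hqn
      (hsum.trans (by gcongr))).trans (ENNReal.ofReal_le_ofReal ?_))
  gcongr ?_ ^ q
  calc 96 * Real.exp 10 * B * √(q / n) ≤ 96 * Real.exp 10 * B * (3 * √(R / n)) := by gcongr
    _ = 288 * Real.exp 10 * B * √(R / n) := by ring

end OpNormMoment

/-! ### Second-order perturbation of a simple eigenvector -/

lemma hasSum_inner_sq {ι : Type*} (e : HilbertBasis ι ℝ E) (x : E) :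
    HasSum (fun i => ⟪e i, x⟫ ^ 2) (‖x‖ ^ 2) := by
  rw [← real_inner_self_eq_norm_sq]
  refine (e.hasSum_inner_mul_inner x x).congr_fun fun i => ?_
  rw [real_inner_comm, sq]

lemma eq_of_forall_inner_hilbertBasis_eq {ι : Type*} (e : HilbertBasis ι ℝ E) {x y : E}
    (h : ∀ i, ⟪e i, x⟫ = ⟪e i, y⟫) : x = y := by
  refine e.repr.injective (lp.ext (funext fun i => ?_))
  simpa only [e.repr_apply_apply] using h i

lemma exists_norm_le_inner_hilbertBasis_eq_mul {ι : Type*} (e : HilbertBasis ι ℝ E) {c : ι → ℝ}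
    {K : ℝ} (hK : 0 ≤ K) (hc : ∀ i, |c i| ≤ K) (x : E) :
    ∃ y : E, ‖y‖ ≤ K * ‖x‖ ∧ ∀ i, ⟪e i, y⟫ = c i * ⟪e i, x⟫ := by
  have hle : ∀ i, (c i * ⟪e i, x⟫) ^ 2 ≤ K ^ 2 * ⟪e i, x⟫ ^ 2 := fun i => by
    rw [mul_pow, ← sq_abs (c i)]
    gcongr
    exact hc i
  have hmem : Memℓp (fun i => c i * ⟪e i, x⟫) 2 := memℓp_gen <| by
    simpa [← abs_mul] using Summable.of_nonneg_of_le (fun i => sq_nonneg _) hle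
      ((hasSum_inner_sq e x).summable.mul_left _)
  have hy : ∀ i, ⟪e i, e.repr.symm ⟨_, hmem⟩⟫ = c i * ⟪e i, x⟫ := fun i => by
    rw [← e.repr_apply_apply, LinearIsometryEquiv.apply_symm_apply]
  refine ⟨e.repr.symm ⟨_, hmem⟩, le_of_sq_le_sq ?_ (by positivity), hy⟩
  rw [mul_pow]
  refine hasSum_le hle ?_ ((hasSum_inner_sq e x).mul_left _)
  simpa only [hy] using hasSum_inner_sq e (e.repr.symm ⟨_, hmem⟩)

lemma exists_opNorm_le_inner_hilbertBasis_eq_mul {ι : Type*} (e : HilbertBasis ι ℝ E) {c : ι → ℝ}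
    {K : ℝ} (hK : 0 ≤ K) (hc : ∀ i, |c i| ≤ K) :
    ∃ C : E →L[ℝ] E, ‖C‖ ≤ K ∧ ∀ x i, ⟪e i, C x⟫ = c i * ⟪e i, x⟫ := by
  choose C hCK hC using exists_norm_le_inner_hilbertBasis_eq_mul e hK hc
  refine ⟨LinearMap.mkContinuous ⟨⟨C, fun x y => ?_⟩, fun t x => ?_⟩ K hCK,
    LinearMap.mkContinuous_norm_le _ hK _, hC⟩ <;>
  refine eq_of_forall_inner_hilbertBasis_eq e fun i => ?_
  · simp only [hC, inner_add_right, mul_add]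
  · simp only [RingHom.id_apply, hC, real_inner_smul_right, mul_left_comm]

/-- `C` is the reduced resolvent of the operator `T` at its eigenvalue `μ` with unit eigenvector
`θ`: it inverts `μ - T` on the orthogonal complement of `θ` and vanishes at `θ`. -/
structure IsReducedResolvent (T : E →L[ℝ] E) (μ : ℝ) (θ : E) (C : E →L[ℝ] E) : Prop where
  map_sub_eq : ∀ x, C (μ • x - T x) = x - ⟪θ, x⟫ • θ
  map_eq_zero : C θ = 0

lemma abs_inv_sub_le {ι : Type*} {a : ι → ℝ} {o : ι} {g : ℝ} (hg : 0 < g)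
    (hgap : ∀ j, j ≠ o → g ≤ |a o - a j|) (j : ι) : |(a o - a j)⁻¹| ≤ g⁻¹ := by
  rcases eq_or_ne j o with rfl | hj
  · simpa using hg.le
  · rw [abs_inv]
    exact inv_anti₀ hg (hgap j hj)

lemma IsEigenbasis.exists_isReducedResolvent {T : E →L[ℝ] E} {ι : Type*} {e : HilbertBasis ι ℝ E}
    {a : ι → ℝ} (h : IsEigenbasis T e a) {o : ι} {g : ℝ} (hg : 0 < g)
    (hgap : ∀ j, j ≠ o → g ≤ |a o - a j|) :
    ∃ C, IsReducedResolvent T (a o) (e o) C ∧ ‖C‖ ≤ g⁻¹ ∧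
      ∀ x, HasSum (fun j => (a o - a j)⁻¹ ^ 2 * ⟪e j, x⟫ ^ 2) (‖C x‖ ^ 2) := by
  obtain ⟨C, hCg, hC⟩ := exists_opNorm_le_inner_hilbertBasis_eq_mul e
    (inv_nonneg.2 hg.le) (abs_inv_sub_le hg hgap)
  refine ⟨C, ⟨fun x => ?_, ?_⟩, hCg, fun x => ?_⟩
  · refine eq_of_forall_inner_hilbertBasis_eq e fun j => ?_
    rw [hC, inner_sub_right, inner_sub_right, real_inner_smul_right, real_inner_smul_right,
      h.inner_map]
    rcases eq_or_ne j o with rfl | hj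
    · simp [e.orthonormal.1 j]
    · have hne : a o - a j ≠ 0 := abs_pos.1 (hg.trans_le (hgap j hj))
      rw [e.orthonormal.inner_eq_zero hj]
      field_simp
      ring
  · refine eq_of_forall_inner_hilbertBasis_eq e fun j => ?_
    rcases eq_or_ne j o with rfl | hj
    · simp [hC]
    · simp [hC, e.orthonormal.inner_eq_zero hj]
  · simpa only [hC, mul_pow] using hasSum_inner_sq e (C x)

namespace IsReducedResolvent

variable {T A C : E →L[ℝ] E} {μ l : ℝ} {θ v : E}

lemma map_sub_smul_eq_sub (hC : IsReducedResolvent T μ θ C) (hv : A v = l • v) :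
    C ((A - T) v - (l - μ) • v) = v - ⟪θ, v⟫ • θ := by
  rw [← hC.map_sub_eq, sub_apply, hv]
  congr 1
  module

lemma sub_eq_smul_add (hC : IsReducedResolvent T μ θ C) (hv : A v = l • v) :
    v - ⟪θ, v⟫ • θ = ⟪θ, v⟫ • C ((A - T) θ) +
      C ((A - T) (v - ⟪θ, v⟫ • θ) - (l - μ) • (v - ⟪θ, v⟫ • θ)) := by
  conv_lhs => rw [← hC.map_sub_smul_eq_sub hv]
  simp only [map_sub, map_smul, smul_sub, hC.map_eq_zero, smul_zero, sub_zero]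
  abel

end IsReducedResolvent

lemma norm_map_sub_smul_le {A C : E →L[ℝ] E} {g t : ℝ} (hC : ‖C‖ ≤ g⁻¹)
    (ht : |t| ≤ ‖A‖) (x : E) : ‖C (A x - t • x)‖ ≤ 2 * (‖A‖ / g) * ‖x‖ := by
  calc ‖C (A x - t • x)‖ ≤ g⁻¹ * (‖A‖ * ‖x‖ + ‖A‖ * ‖x‖) := by
        refine C.le_of_opNorm_le_of_le hC ((norm_sub_le _ _).trans ?_)
        rw [norm_smul, Real.norm_eq_abs]
        gcongr
        exact A.le_opNorm x
    _ = 2 * (‖A‖ / g) * ‖x‖ := by ring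

lemma norm_sub_inner_smul_sq {θ v : E} (hθ : ‖θ‖ = 1) (hv : ‖v‖ = 1) :
    ‖v - ⟪θ, v⟫ • θ‖ ^ 2 = 1 - ⟪θ, v⟫ ^ 2 := by
  rw [norm_sub_sq_real, real_inner_smul_right, norm_smul, hθ, hv, real_inner_comm,
    Real.norm_eq_abs, mul_one, sq_abs]
  ring

lemma abs_norm_sq_sub_sq_mul_norm_sq_le {w z u : E} {α d : ℝ} (hd : 0 ≤ d) (hα : |α| ≤ 1)
    (hw : w = α • z + u) (hzd : ‖z‖ ≤ d) (hwd : ‖w‖ ≤ 2 * d) (hud : ‖u‖ ≤ 4 * d ^ 2) :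
    |‖w‖ ^ 2 - α ^ 2 * ‖z‖ ^ 2| ≤ 12 * d ^ 3 := by
  have hαz : ‖α • z‖ ≤ d := by
    rw [norm_smul, Real.norm_eq_abs]
    exact (mul_le_of_le_one_left (norm_nonneg z) hα).trans hzd
  have hdiff : |‖w‖ - ‖α • z‖| ≤ 4 * d ^ 2 := by
    refine (abs_norm_sub_norm_le w (α • z)).trans ?_
    rwa [hw, add_sub_cancel_left]
  calc |‖w‖ ^ 2 - α ^ 2 * ‖z‖ ^ 2| = (‖w‖ + ‖α • z‖) * |‖w‖ - ‖α • z‖| := by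
        rw [← sq_abs α, ← Real.norm_eq_abs α, ← mul_pow, ← norm_smul, sq_sub_sq, abs_mul,
          abs_of_nonneg (by positivity : 0 ≤ ‖w‖ + ‖α • z‖)]
    _ ≤ (2 * d + d) * (4 * d ^ 2) := by gcongr
    _ = 12 * d ^ 3 := by ring

lemma abs_inner_sq_sub_one_add_norm_sq_le {θ v z u : E} {d : ℝ} (hθ : ‖θ‖ = 1) (hv : ‖v‖ = 1)
    (hw : v - ⟪θ, v⟫ • θ = ⟪θ, v⟫ • z + u) (hzd : ‖z‖ ≤ d) (hwd : ‖v - ⟪θ, v⟫ • θ‖ ≤ 2 * d)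
    (hud : ‖u‖ ≤ 4 * d ^ 2) :
    |⟪θ, v⟫ ^ 2 - 1 + ‖z‖ ^ 2| ≤ 16 * d ^ 3 := by
  have hd : 0 ≤ d := (norm_nonneg z).trans hzd
  have hwα := norm_sub_inner_smul_sq hθ hv
  set w := v - ⟪θ, v⟫ • θ
  set α := ⟪θ, v⟫
  have hα : α ^ 2 ≤ 1 := by linarith [sq_nonneg ‖w‖]
  have hz2 : ‖z‖ ^ 2 ≤ d ^ 2 := by gcongr
  rcases le_total 1 d with hd₁ | hd₁
  · have h23 : d ^ 2 ≤ d ^ 3 := pow_le_pow_right₀ hd₁ (by norm_num)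
    have h12 : 1 ≤ d ^ 2 := one_le_pow₀ hd₁
    rw [abs_le]
    constructor <;> linarith [sq_nonneg α, sq_nonneg ‖z‖]
  · have hmain := abs_le.1 <| abs_norm_sq_sub_sq_mul_norm_sq_le hd
      ((sq_le_one_iff_abs_le_one α).1 hα) hw hzd hwd hud
    have hprod : ‖w‖ ^ 2 * ‖z‖ ^ 2 ≤ 4 * d ^ 3 := by
      calc ‖w‖ ^ 2 * ‖z‖ ^ 2 ≤ (2 * d) ^ 2 * d ^ 2 := by gcongr
        _ = 4 * d ^ 3 * d := by ring
        _ ≤ 4 * d ^ 3 := mul_le_of_le_one_right (by positivity) hd₁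
    have hkey : α ^ 2 - 1 + ‖z‖ ^ 2 =
        -(‖w‖ ^ 2 - α ^ 2 * ‖z‖ ^ 2) + ‖w‖ ^ 2 * ‖z‖ ^ 2 := by rw [hwα]; ring
    rw [hkey, abs_le]
    constructor <;> linarith [hmain.1, hmain.2, mul_nonneg (sq_nonneg ‖w‖) (sq_nonneg ‖z‖)]

lemma IsReducedResolvent.abs_inner_sq_sub_one_add_le {T A C : E →L[ℝ] E} {μ l g : ℝ} {θ v : E}
    (hC : IsReducedResolvent T μ θ C) (hg : 0 < g) (hCg : ‖C‖ ≤ g⁻¹) (hθ : ‖θ‖ = 1)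
    (hv : ‖v‖ = 1) (hAv : A v = l • v) (hl : |l - μ| ≤ ‖A - T‖) :
    |⟪θ, v⟫ ^ 2 - 1 + ‖C ((A - T) θ)‖ ^ 2| ≤ 16 * (‖A - T‖ / g) ^ 3 := by
  have hw : ‖v - ⟪θ, v⟫ • θ‖ ≤ 2 * (‖A - T‖ / g) := by
    rw [← hC.map_sub_smul_eq_sub hAv]
    simpa only [hv, mul_one] using norm_map_sub_smul_le hCg hl v
  refine abs_inner_sq_sub_one_add_norm_sq_le hθ hv (hC.sub_eq_smul_add hAv) ?_ hw
    ((norm_map_sub_smul_le hCg hl _).trans ?_)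
  · calc ‖C ((A - T) θ)‖ ≤ g⁻¹ * (‖A - T‖ * 1) :=
          C.le_of_opNorm_le_of_le hCg ((A - T).le_opNorm_of_le hθ.le)
      _ = ‖A - T‖ / g := by ring
  · calc 2 * (‖A - T‖ / g) * ‖v - ⟪θ, v⟫ • θ‖
        ≤ 2 * (‖A - T‖ / g) * (2 * (‖A - T‖ / g)) := by gcongr
      _ = 4 * (‖A - T‖ / g) ^ 2 := by ring

/-! ### The mean of the second-order term -/

lemma IsEigenbasis.inner_map_self_nonneg {T : E →L[ℝ] E} {ι : Type*} {e : HilbertBasis ι ℝ E}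
    {a : ι → ℝ} (h : IsEigenbasis T e a) (x : E) : 0 ≤ ⟪T x, x⟫ :=
  (h.hasSum_inner_map_self x).nonneg fun i => mul_nonneg (h.nonneg i) (sq_nonneg _)

lemma IsEigenbasis.inner_sampleCov_sub_apply {T : E →L[ℝ] E} {ι : Type*}
    {e : HilbertBasis ι ℝ E} {a : ι → ℝ} {n : ℕ} (h : IsEigenbasis T e a) {i j : ι} (hij : i ≠ j)
    (x : Fin n → E) :
    ⟪e i, (sampleCov x - T) (e j)⟫ = (n : ℝ)⁻¹ * ∑ k, ⟪x k, e i⟫ * ⟪x k, e j⟫ := by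
  rw [sub_apply, inner_sub_right, h.inner_map, e.orthonormal.inner_eq_zero hij, mul_zero, sub_zero,
    ← inner_sampleCov_left, inner_sampleCov]

lemma IsEigenbasis.inner_sampleCov_sub_apply_eq_zero {T : E →L[ℝ] E} {ι : Type*}
    {e : HilbertBasis ι ℝ E} {a : ι → ℝ} (h : IsEigenbasis T e a) {n : ℕ} {x : Fin n → E} {i : ι}
    (hi : a i = 0) (hx : ∀ k, ⟪x k, e i⟫ = 0) (y : E) : ⟪e i, (sampleCov x - T) y⟫ = 0 := by
  rw [sub_apply, inner_sub_right, ← inner_sampleCov_left, ← h.inner_map_left, ← inner_sub_left,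
    ← sub_apply, h.sampleCov_sub_apply_eq_zero hi hx, inner_zero_left]

section GaussianCoordinates

variable [MeasurableSpace E] {ν : Measure E} {T : E →L[ℝ] E} {ι : Type*}
  {e : HilbertBasis ι ℝ E} {a : ι → ℝ}

lemma IsGaussian.hasGaussianLaw_inner (hν : IsGaussian ν T) (u : E) :
    HasGaussianLaw (fun x => ⟪x, u⟫) ν :=
  ⟨by rw [hν.2]; infer_instance⟩

lemma IsGaussian.memLp_two_inner_mul_inner (hν : IsGaussian ν T) (u w : E) :
    MemLp (fun x => ⟪x, u⟫ * ⟪x, w⟫) 2 ν := by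
  have : ENNReal.HolderTriple 4 4 2 := ⟨by
    rw [← ENNReal.toReal_eq_toReal_iff' (by simp) (by simp), ENNReal.toReal_add] <;> norm_num⟩
  exact ((hν.hasGaussianLaw_inner w).memLp (p := 4) (by simp)).mul
    ((hν.hasGaussianLaw_inner u).memLp (p := 4) (by simp))

lemma IsGaussian.integrable_inner_sampleCov_sub_apply_sq {n : ℕ} (hν : IsGaussian ν T)
    (h : IsEigenbasis T e a) {i j : ι} (hij : i ≠ j) :
    Integrable (fun x : Fin n → E => ⟪e i, (sampleCov x - T) (e j)⟫ ^ 2)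
      (Measure.pi fun _ : Fin n => ν) := by
  have := hν.1
  simp only [h.inner_sampleCov_sub_apply hij, mul_pow]
  refine (MemLp.integrable_sq (memLp_finsetSum _ fun k _ => ?_)).const_mul _
  exact (hν.memLp_two_inner_mul_inner (e i) (e j)).comp_measurePreserving
    (measurePreserving_eval _ k)

variable [BorelSpace E]

lemma IsGaussian.integral_inner (hν : IsGaussian ν T) (u : E) : ∫ x, ⟪x, u⟫ ∂ν = 0 := by
  have hmap := integral_id_gaussianReal (μ := 0) (v := ⟪T u, u⟫.toNNReal)
  rwa [← hν.2, integral_map (by fun_prop) (by fun_prop)] at hmap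

lemma IsGaussian.variance_inner (hν : IsGaussian ν T) {u : E} (hu : 0 ≤ ⟪T u, u⟫) :
    Var[fun x => ⟪x, u⟫; ν] = ⟪T u, u⟫ := by
  have hmap := variance_id_gaussianReal (μ := 0) (v := ⟪T u, u⟫.toNNReal)
  rwa [Real.coe_toNNReal _ hu, ← hν.2, variance_map aemeasurable_id (by fun_prop)] at hmap

lemma IsGaussian.covariance_inner (hν : IsGaussian ν T) (h : IsEigenbasis T e a) (u w : E) :
    cov[fun x => ⟪x, u⟫, fun x => ⟪x, w⟫; ν] = ⟪T u, w⟫ := by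
  have := hν.1
  have hadd := variance_fun_add (hν.hasGaussianLaw_inner u).memLp_two
    (hν.hasGaussianLaw_inner w).memLp_two
  simp only [← inner_add_right] at hadd
  rw [hν.variance_inner (h.inner_map_self_nonneg _), hν.variance_inner (h.inner_map_self_nonneg _),
    hν.variance_inner (h.inner_map_self_nonneg _), map_add, inner_add_left, inner_add_right,
    inner_add_right, h.inner_map_left w u, real_inner_comm (T u) w] at hadd
  linarith

lemma IsGaussian.integral_inner_sq (hν : IsGaussian ν T) (h : IsEigenbasis T e a) (i : ι) :
    ∫ x, ⟪x, e i⟫ ^ 2 ∂ν = a i := by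
  rw [← variance_of_integral_eq_zero (by fun_prop) (hν.integral_inner _),
    hν.variance_inner (h.inner_map_self_nonneg _), h.map_eq, real_inner_smul_left,
    real_inner_self_eq_norm_sq, e.orthonormal.1, one_pow, mul_one]

end GaussianCoordinates

section OffDiagonal

variable [MeasurableSpace H] [BorelSpace H] {ν : Measure H} {T : H →L[ℝ] H} {ι : Type*}
  {e : HilbertBasis ι ℝ H} {a : ι → ℝ} {i j : ι}

lemma IsGaussian.isGaussian (hν : IsGaussian ν T) : ProbabilityTheory.IsGaussian ν := by
  refine isGaussian_of_map_eq_gaussianReal fun L => ?_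
  let u := (InnerProductSpace.toDual ℝ H).symm L
  refine ⟨0, ⟪T u, u⟫.toNNReal, ?_⟩
  rw [← hν.2 u]
  congr with x
  rw [real_inner_comm, InnerProductSpace.toDual_symm_apply]

lemma IsGaussian.indepFun_inner (hν : IsGaussian ν T) (h : IsEigenbasis T e a) (hij : i ≠ j) :
    IndepFun (fun x => ⟪x, e i⟫) (fun x => ⟪x, e j⟫) ν := by
  have := hν.isGaussian
  have hpair : HasGaussianLaw (fun x => (⟪x, e i⟫, ⟪x, e j⟫)) ν := by
    have := HasGaussianLaw.map_fun (X := (id : H → H)) (P := ν) ⟨by simpa⟩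
      ((innerSL ℝ (e i)).prod (innerSL ℝ (e j)))
    simpa [real_inner_comm] using this
  refine hpair.indepFun_of_covariance_eq_zero ?_
  rw [hν.covariance_inner h, h.map_eq, real_inner_smul_left, e.orthonormal.inner_eq_zero hij,
    mul_zero]

lemma IsGaussian.integral_inner_mul_inner (hν : IsGaussian ν T) (h : IsEigenbasis T e a)
    (hij : i ≠ j) : ∫ x, ⟪x, e i⟫ * ⟪x, e j⟫ ∂ν = 0 := by
  rw [(hν.indepFun_inner h hij).integral_fun_mul_eq_mul_integral (by fun_prop) (by fun_prop),
    hν.integral_inner, zero_mul]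

lemma IsGaussian.variance_inner_mul_inner (hν : IsGaussian ν T) (h : IsEigenbasis T e a)
    (hij : i ≠ j) : Var[fun x => ⟪x, e i⟫ * ⟪x, e j⟫; ν] = a i * a j := by
  rw [variance_of_integral_eq_zero (by fun_prop) (hν.integral_inner_mul_inner h hij)]
  simp only [mul_pow]
  have hind := (hν.indepFun_inner h hij).comp (φ := (· ^ 2)) (ψ := (· ^ 2))
    (by fun_prop) (by fun_prop)
  refine (hind.integral_fun_mul_eq_mul_integral (by fun_prop) (by fun_prop)).trans ?_
  exact congr_arg₂ _ (hν.integral_inner_sq h i) (hν.integral_inner_sq h j)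

variable {n : ℕ}

lemma IsGaussian.integral_inner_sampleCov_sub_apply_sq (hν : IsGaussian ν T)
    (h : IsEigenbasis T e a) (hn : n ≠ 0) (hij : i ≠ j) :
    ∫ x, ⟪e i, (sampleCov x - T) (e j)⟫ ^ 2 ∂(Measure.pi fun _ : Fin n => ν) =
      a i * a j / n := by
  have := hν.1
  set Y : H → ℝ := fun x => ⟪x, e i⟫ * ⟪x, e j⟫
  have hY := hν.memLp_two_inner_mul_inner (e i) (e j)
  have hsum := variance_sum_pi (ι := Fin n) (μ := fun _ => ν) (X := fun _ => Y) fun _ => hY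
  have hmean : ∫ x, (∑ k, fun x : Fin n → H => Y (x k)) x ∂(Measure.pi fun _ : Fin n => ν) = 0 := by
    have hint : ∀ k, Integrable (fun x : Fin n → H => Y (x k)) (Measure.pi fun _ => ν) := fun k =>
      (hY.comp_measurePreserving (measurePreserving_eval _ k)).integrable one_le_two
    simp only [Finset.sum_apply]
    rw [integral_finsetSum _ fun k _ => hint k]
    refine Finset.sum_eq_zero fun k _ => ?_
    rw [integral_comp_eval (μ := fun _ : Fin n => ν) (f := Y) hY.aestronglyMeasurable]
    exact hν.integral_inner_mul_inner h hij
  rw [variance_of_integral_eq_zero (by fun_prop) hmean] at hsum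
  simp only [Finset.sum_apply, hν.variance_inner_mul_inner h hij, Y, Finset.sum_const,
    Finset.card_univ, Fintype.card_fin, nsmul_eq_mul] at hsum
  simp only [h.inner_sampleCov_sub_apply hij, mul_pow]
  rw [integral_const_mul, hsum]
  field_simp

end OffDiagonal

lemma integrable_and_hasSum_integral_of_nonneg {Ω κ : Type*} [MeasurableSpace Ω] {μ : Measure Ω}
    [Countable κ] {f : κ → Ω → ℝ} (hf : ∀ k ω, 0 ≤ f k ω) (hint : ∀ k, Integrable (f k) μ)
    (hsum : Summable fun k => ∫ ω, f k ω ∂μ) {Z : Ω → ℝ}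
    (hZ : ∀ᵐ ω ∂μ, HasSum (fun k => f k ω) (Z ω)) :
    Integrable Z μ ∧ HasSum (fun k => ∫ ω, f k ω ∂μ) (∫ ω, Z ω ∂μ) := by
  have hZ₀ : 0 ≤ᵐ[μ] Z := hZ.mono fun ω hω => hω.nonneg fun k => hf k ω
  have hmeas : AEStronglyMeasurable Z μ :=
    aestronglyMeasurable_of_tendsto_ae (atTop : Filter (Finset κ))
      (fun s => (integrable_finsetSum s fun k _ => hint k).aestronglyMeasurable) hZ
  constructor
  · refine ⟨hmeas, (hasFiniteIntegral_iff_ofReal hZ₀).2 ?_⟩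
    calc ∫⁻ ω, ENNReal.ofReal (Z ω) ∂μ = ∫⁻ ω, ∑' k, ENNReal.ofReal (f k ω) ∂μ :=
          lintegral_congr_ae <| hZ.mono fun ω hω => by
            dsimp only
            rw [← hω.tsum_eq, ENNReal.ofReal_tsum_of_nonneg (fun k => hf k ω) hω.summable]
      _ = ∑' k, ENNReal.ofReal (∫ ω, f k ω ∂μ) := by
          rw [lintegral_tsum fun k => (hint k).aemeasurable.ennreal_ofReal]
          exact tsum_congr fun k =>
            (ofReal_integral_eq_lintegral_ofReal (hint k) (ae_of_all _ (hf k))).symm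
      _ < ∞ := by
          rw [← ENNReal.ofReal_tsum_of_nonneg (fun k => integral_nonneg (hf k)) hsum]
          exact ENNReal.ofReal_lt_top
  · rw [integral_congr_ae (hZ.mono fun ω hω => hω.tsum_eq.symm)]
    refine hasSum_integral_of_summable_integral_norm hint ?_
    simpa only [Real.norm_of_nonneg (hf _ _)] using hsum

lemma IsEigenbasis.summable_sq_mul {T : E →L[ℝ] E} {ι : Type*} {e : HilbertBasis ι ℝ E}
    {a c : ι → ℝ} (h : IsEigenbasis T e a) {K : ℝ} (hc : ∀ j, |c j| ≤ K) (o : ι) (n : ℕ) :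
    Summable fun j => c j ^ 2 * (a j * a o / n) := by
  have ha : ∀ j, 0 ≤ a j * a o / n := fun j =>
    div_nonneg (mul_nonneg (h.nonneg j) (h.nonneg o)) n.cast_nonneg
  refine .of_nonneg_of_le (fun j => mul_nonneg (sq_nonneg _) (ha j)) (fun j => ?_)
    (((h.summable.mul_right (a o)).div_const (n : ℝ)).mul_left (K ^ 2))
  exact mul_le_mul_of_nonneg_right (sq_le_sq' (abs_le.1 (hc j)).1 (abs_le.1 (hc j)).2) (ha j)

lemma IsGaussian.integrable_and_hasSum_norm_sq_apply_sampleCov_sub [MeasurableSpace H]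
    [BorelSpace H] {ν : Measure H} {T C : H →L[ℝ] H} {ι : Type*} {e : HilbertBasis ι ℝ H}
    {a c : ι → ℝ} {n : ℕ} (hν : IsGaussian ν T) (h : IsEigenbasis T e a)
    (hnull : ∀ᵐ x ∂ν, ∀ i, a i = 0 → ⟪x, e i⟫ = 0) (hn : n ≠ 0) {o : ι} (ho : c o = 0)
    {K : ℝ} (hc : ∀ j, |c j| ≤ K)
    (hC : ∀ x, HasSum (fun j => c j ^ 2 * ⟪e j, x⟫ ^ 2) (‖C x‖ ^ 2)) :
    Integrable (fun x => ‖C ((sampleCov x - T) (e o))‖ ^ 2) (Measure.pi fun _ : Fin n => ν) ∧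
    HasSum (fun j => c j ^ 2 * (a j * a o / n))
      (∫ x, ‖C ((sampleCov x - T) (e o))‖ ^ 2 ∂(Measure.pi fun _ : Fin n => ν)) := by
  have := hν.1
  have : Countable (Function.support a) := h.summable.countable_support.to_subtype
  have hnull' : ∀ᵐ x ∂(Measure.pi fun _ : Fin n => ν), ∀ k i, a i = 0 → ⟪x k, e i⟫ = 0 :=
    ae_all_iff.2 fun k => (Measure.tendsto_eval_ae_ae (μ := fun _ => ν) (i := k)).eventually hnull
  set f : ι → (Fin n → H) → ℝ := fun j x => c j ^ 2 * ⟪e j, (sampleCov x - T) (e o)⟫ ^ 2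
  have hf : ∀ j, Integrable (f j) (Measure.pi fun _ : Fin n => ν) ∧
      ∫ x, f j x ∂(Measure.pi fun _ : Fin n => ν) = c j ^ 2 * (a j * a o / n) := by
    intro j
    rcases eq_or_ne j o with rfl | hj
    · simp [f, ho]
    · refine ⟨(hν.integrable_inner_sampleCov_sub_apply_sq h hj).const_mul _, ?_⟩
      rw [integral_const_mul, hν.integral_inner_sampleCov_sub_apply_sq h hn hj]
  have hZ : ∀ᵐ x ∂(Measure.pi fun _ : Fin n => ν), HasSum (fun j : Function.support a => f j x)
      (‖C ((sampleCov x - T) (e o))‖ ^ 2) := by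
    filter_upwards [hnull'] with x hx
    have hsupp : Function.support (fun j => f j x) ⊆ Function.support a := fun j hj h₀ => hj <| by
      simp only [f, h.inner_sampleCov_sub_apply_eq_zero h₀ fun k => hx k j h₀, ne_eq,
        OfNat.ofNat_ne_zero, not_false_eq_true, zero_pow, mul_zero]
    exact (hasSum_subtype_iff_of_support_subset hsupp).2 (hC ((sampleCov x - T) (e o)))
  obtain ⟨hint, hmean⟩ :=
    integrable_and_hasSum_integral_of_nonneg (f := fun j : Function.support a => f j)
      (fun j x => by positivity) (fun j => (hf j).1)
      (by simp only [(hf _).2]; exact (h.summable_sq_mul hc o n).subtype _) hZ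
  simp only [(hf _).2] at hmean
  have hsupp : Function.support (fun j => c j ^ 2 * (a j * a o / n)) ⊆ Function.support a :=
    fun j hj h₀ => hj <| by simp [h₀]
  exact ⟨hint, (hasSum_subtype_iff_of_support_subset hsupp).1 hmean⟩

/-! ### The min-max eigenvalues -/

section MinMax

variable {A B : E →L[ℝ] E} {j : ℕ}

lemma abs_inner_apply_self_le (A : E →L[ℝ] E) {x : E} (hx : ‖x‖ = 1) : |⟪A x, x⟫| ≤ ‖A‖ := by
  simpa [hx] using (abs_real_inner_le_norm (A x) x).trans
    (mul_le_mul_of_nonneg_right (A.le_opNorm x) (norm_nonneg x))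

lemma exists_mem_norm_eq_one_inner_eq_zero {κ : Type*} [Fintype κ] (w : κ → E)
    {V : Submodule ℝ E} (hV : Fintype.card κ < Module.finrank ℝ V) :
    ∃ x ∈ V, ‖x‖ = 1 ∧ ∀ i, ⟪w i, x⟫ = 0 := by
  have : FiniteDimensional ℝ V := FiniteDimensional.of_finrank_pos (by omega)
  let f : V →ₗ[ℝ] (κ → ℝ) := LinearMap.pi fun i => (innerSL ℝ (w i)).toLinearMap ∘ₗ V.subtype
  have hker : LinearMap.ker f ≠ ⊥ := LinearMap.ker_ne_bot_of_finrank_lt (by simpa using hV)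
  obtain ⟨y, hy, hy₀⟩ := Submodule.exists_mem_ne_zero_of_ne_bot hker
  refine ⟨‖(y : E)‖⁻¹ • (y : E), V.smul_mem _ y.2, norm_smul_inv_norm (by simpa using hy₀),
    fun i => ?_⟩
  have hi : ⟪w i, (y : E)⟫ = 0 := congrFun (LinearMap.mem_ker.1 hy) i
  rw [real_inner_smul_right, hi, mul_zero]

lemma nonempty_unit_mem {V : Submodule ℝ E} (hV : Module.finrank ℝ V = j + 1) :
    Nonempty {x : E // x ∈ V ∧ ‖x‖ = 1} := by
  obtain ⟨x, hxV, hx, -⟩ := exists_mem_norm_eq_one_inner_eq_zero (κ := Empty) (V := V)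
    Empty.elim (by simp [hV])
  exact ⟨x, hxV, hx⟩

lemma bddBelow_range_inner_apply_self (A : E →L[ℝ] E) (V : Submodule ℝ E) :
    BddBelow (range fun x : {x : E // x ∈ V ∧ ‖x‖ = 1} => ⟪A x.1, x.1⟫) :=
  ⟨-‖A‖, forall_mem_range.2 fun x => (abs_le.1 (abs_inner_apply_self_le A x.2.2)).1⟩

lemma bddAbove_range_iInf_inner_apply_self (A : E →L[ℝ] E) (j : ℕ) :
    BddAbove (range fun V : {V : Submodule ℝ E // Module.finrank ℝ V = j + 1} =>
      ⨅ x : {x : E // x ∈ V.1 ∧ ‖x‖ = 1}, ⟪A x.1, x.1⟫) := by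
  refine ⟨‖A‖, forall_mem_range.2 fun V => ?_⟩
  obtain ⟨x⟩ := nonempty_unit_mem V.2
  exact ciInf_le_of_le (bddBelow_range_inner_apply_self A V.1) x
    (abs_le.1 (abs_inner_apply_self_le A x.2.2)).2

lemma exists_finrank_eq_of_lam_ne_zero (h : lam A j ≠ 0) :
    ∃ V : Submodule ℝ E, Module.finrank ℝ V = j + 1 := by
  contrapose! h
  have : IsEmpty {V : Submodule ℝ E // Module.finrank ℝ V = j + 1} := ⟨fun V => h V.1 V.2⟩
  rw [lam, Real.iSup_of_isEmpty]

lemma le_lam {V : Submodule ℝ E} (hV : Module.finrank ℝ V = j + 1) {c : ℝ}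
    (h : ∀ x ∈ V, ‖x‖ = 1 → c ≤ ⟪A x, x⟫) : c ≤ lam A j :=
  have := nonempty_unit_mem hV
  le_ciSup_of_le (bddAbove_range_iInf_inner_apply_self A j) ⟨V, hV⟩
    (le_ciInf fun x => h x.1 x.2.1 x.2.2)

lemma lam_le {κ : Type*} [Fintype κ] (w : κ → E) (hw : Fintype.card κ ≤ j) {c : ℝ} (hc : 0 ≤ c)
    (h : ∀ x, (∀ i, ⟪w i, x⟫ = 0) → ‖x‖ = 1 → ⟪A x, x⟫ ≤ c) : lam A j ≤ c := by
  refine Real.iSup_le (fun V => ?_) hc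
  obtain ⟨x, hxV, hx, hwx⟩ := exists_mem_norm_eq_one_inner_eq_zero w (V := V.1) (by
    rw [V.2]; omega)
  exact ciInf_le_of_le (bddBelow_range_inner_apply_self A V.1) ⟨x, hxV, hx⟩ (h x hwx hx)

lemma lam_le_lam_add_opNorm_sub (A B : E →L[ℝ] E) (j : ℕ) : lam A j ≤ lam B j + ‖A - B‖ := by
  rcases isEmpty_or_nonempty {V : Submodule ℝ E // Module.finrank ℝ V = j + 1} with _ | _
  · simp [lam, Real.iSup_of_isEmpty]
  · refine ciSup_le fun V => sub_le_iff_le_add.1 (le_lam V.2 fun x hxV hx => ?_)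
    have hinf := ciInf_le (bddBelow_range_inner_apply_self A V.1) ⟨x, hxV, hx⟩
    have hAB := (abs_le.1 (abs_inner_apply_self_le (A - B) hx)).2
    rw [sub_apply, inner_sub_left] at hAB
    linarith

lemma abs_lam_sub_lam_le (A B : E →L[ℝ] E) (j : ℕ) : |lam A j - lam B j| ≤ ‖A - B‖ := by
  have hAB := lam_le_lam_add_opNorm_sub A B j
  have hBA := lam_le_lam_add_opNorm_sub B A j
  rw [norm_sub_rev] at hBA
  exact abs_sub_le_iff.2 ⟨by linarith, by linarith⟩

variable {J : Type*} {v : J → E} {a : J → ℝ} {s : Finset J} {c : ℝ}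

lemma le_lam_of_orthonormal (hv : Orthonormal ℝ v) (hs : s.card = j + 1)
    (h : ∀ x, (∀ i ∉ s, ⟪v i, x⟫ = 0) → ∑ i ∈ s, ⟪v i, x⟫ ^ 2 = 1 → c ≤ ⟪A x, x⟫) :
    c ≤ lam A j := by
  have hrank : Module.finrank ℝ (Submodule.span ℝ (v '' s)) = s.card := by
    rw [Set.image_eq_range, ← Fintype.card_coe]
    exact finrank_span_eq_card (hv.comp _ Subtype.val_injective).linearIndependent (ι := s)
  refine le_lam (hrank.trans hs) fun x hxV hx => ?_
  obtain ⟨y, rfl⟩ := (Submodule.mem_span_image_finset_iff_exists_fun' ℝ).1 hxV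
  refine h _ (fun i hi => ?_) ?_
  · refine (inner_sum ..).trans (Finset.sum_eq_zero fun k hk => ?_)
    rw [real_inner_smul_right, hv.inner_eq_zero (ne_of_mem_of_not_mem hk hi).symm, mul_zero]
  · rw [← one_pow 2, ← hx, ← real_inner_self_eq_norm_sq, sum_inner]
    exact Finset.sum_congr rfl fun i hi => by
      rw [real_inner_smul_left, hv.inner_right_sum y hi, sq]

lemma le_lam_of_hasSum (hv : Orthonormal ℝ v)
    (hA : ∀ x, HasSum (fun i => a i * ⟪v i, x⟫ ^ 2) ⟪A x, x⟫) (hs : s.card = j + 1)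
    (hc : ∀ i ∈ s, c ≤ a i) : c ≤ lam A j := by
  refine le_lam_of_orthonormal hv hs fun x hout hnorm => ?_
  have hsum : HasSum (fun i => a i * ⟪v i, x⟫ ^ 2) (∑ i ∈ s, a i * ⟪v i, x⟫ ^ 2) :=
    hasSum_sum_of_ne_finset_zero fun i hi => by rw [hout i hi, sq, mul_zero, mul_zero]
  rw [(hA x).unique hsum, ← mul_one c, ← hnorm, Finset.mul_sum]
  exact Finset.sum_le_sum fun i hi => mul_le_mul_of_nonneg_right (hc i hi) (sq_nonneg _)

lemma lam_le_of_hasSum (hv : Orthonormal ℝ v)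
    (hA : ∀ x, HasSum (fun i => a i * ⟪v i, x⟫ ^ 2) ⟪A x, x⟫) (hs : s.card ≤ j) (hc₀ : 0 ≤ c)
    (hc : ∀ i ∉ s, a i ≤ c) : lam A j ≤ c := by
  refine lam_le (fun i : s => v i) (by rwa [Fintype.card_coe]) hc₀ fun x hxs hx => ?_
  have hsummable : Summable fun i => ⟪v i, x⟫ ^ 2 := by
    simpa using hv.inner_products_summable x
  calc ⟪A x, x⟫ ≤ ∑' i, c * ⟪v i, x⟫ ^ 2 := by
        refine hasSum_le (fun i => ?_) (hA x) (hsummable.mul_left c).hasSum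
        by_cases hi : i ∈ s
        · simp [hxs ⟨i, hi⟩]
        · exact mul_le_mul_of_nonneg_right (hc i hi) (sq_nonneg _)
    _ ≤ c := by
        rw [tsum_mul_left]
        exact mul_le_of_le_one_right hc₀ (by simpa [hx] using hv.tsum_inner_products_le x)

end MinMax

/-! ### Eigenvectors of finite rank operators and simple eigenvalues -/

lemma exists_eigenvector_lam {A : E →L[ℝ] E} (hA : ∀ x y, ⟪A x, y⟫ = ⟪x, A y⟫)
    (hpos : ∀ x, 0 ≤ ⟪A x, x⟫) (W : Submodule ℝ E) [FiniteDimensional ℝ W] (hAW : ∀ x, A x ∈ W)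
    {j : ℕ} {V : Submodule ℝ E} (hV : Module.finrank ℝ V = j + 1) :
    ∃ v : E, ‖v‖ = 1 ∧ A v = lam A j • v := by
  have : FiniteDimensional ℝ V := .of_finrank_pos (by omega)
  let U := V ⊔ W
  have hAU : ∀ x, A x ∈ U := fun x => (le_sup_right : W ≤ U) (hAW x)
  have hsymm : (A.toLinearMap.restrict fun x (_ : x ∈ U) => hAU x).IsSymmetric := fun x y => hA x y
  let b := hsymm.eigenvectorBasis rfl
  let l := hsymm.eigenvalues rfl
  have hb : ∀ i, A (b i) = l i • (b i : E) := fun i =>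
    congrArg Subtype.val (hsymm.apply_eigenvectorBasis rfl i)
  have hortho : Orthonormal ℝ fun i => (b i : E) := b.orthonormal.comp_linearIsometry U.subtypeₗᵢ
  have hquad : ∀ x, HasSum (fun i => l i * ⟪(b i : E), x⟫ ^ 2) ⟪A x, x⟫ := fun x => by
    have hAx : A x = ∑ i, ⟪(b i : E), A x⟫ • (b i : E) := by
      simpa using congrArg Subtype.val (b.sum_repr' ⟨A x, hAU x⟩).symm
    rw [hAx, sum_inner]
    refine (hasSum_fintype _).congr_fun fun i => ?_
    rw [← hA, hb, real_inner_smul_left, real_inner_smul_left]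
    ring
  have hl₀ : ∀ i, 0 ≤ l i := fun i => by
    simpa [hb, real_inner_smul_left, hortho.1 i] using hpos (b i)
  have hj : j < Module.finrank ℝ U := by
    have : Module.finrank ℝ V ≤ Module.finrank ℝ U := Submodule.finrank_mono le_sup_left
    omega
  have hlam : lam A j = l ⟨j, hj⟩ := by
    refine le_antisymm (lam_le_of_hasSum hortho hquad (s := Finset.Iio ⟨j, hj⟩) (by simp) (hl₀ _)
      fun i hi => ?_) (le_lam_of_hasSum hortho hquad (s := Finset.Iic ⟨j, hj⟩) (by simp)
      fun i hi => ?_)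
    · exact hsymm.eigenvalues_antitone rfl (by simpa using hi)
    · exact hsymm.eigenvalues_antitone rfl (by simpa using hi)
  exact ⟨b ⟨j, hj⟩, hortho.1 _, by rw [hlam, hb]⟩

lemma exists_eigenvector_lam_sampleCov {n : ℕ} (x : Fin n → E) {j : ℕ} {V : Submodule ℝ E}
    (hV : Module.finrank ℝ V = j + 1) :
    ∃ v : E, ‖v‖ = 1 ∧ sampleCov x v = lam (sampleCov x) j • v := by
  have : FiniteDimensional ℝ (Submodule.span ℝ (range x)) := .span_of_finite ℝ (finite_range x)
  refine exists_eigenvector_lam (inner_sampleCov_left x) (fun u => ?_)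
    (Submodule.span ℝ (range x)) (fun u => ?_) hV
  · rw [inner_sampleCov]
    exact mul_nonneg (by positivity) (Finset.sum_nonneg fun k _ => mul_self_nonneg _)
  · rw [sampleCov_apply]
    exact Submodule.smul_mem _ _ <| Submodule.sum_mem _ fun k _ =>
      Submodule.smul_mem _ _ (Submodule.subset_span ⟨k, rfl⟩)

lemma le_sub_or_add_le_of_le_abs_sub {x y g : ℝ} (h : g ≤ |x - y|) : y ≤ x - g ∨ x + g ≤ y :=
  (le_abs.1 h).imp le_sub_comm.1 fun h' => by linarith

namespace IsEigenbasis

variable {T : E →L[ℝ] E} {ι : Type*} {e : HilbertBasis ι ℝ E} {a : ι → ℝ} {o : ι}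

lemma finite_setOf_le (h : IsEigenbasis T e a) {c : ℝ} (hc : 0 < c) : {i | c ≤ a i}.Finite := by
  simpa [Filter.eventually_cofinite] using
    h.summable.tendsto_cofinite_zero.eventually (gt_mem_nhds hc)

lemma lam_eq_iff (h : IsEigenbasis T e a) (ho : 0 < a o) {g : ℝ} (hg : 0 < g)
    (hgap : ∀ j, j ≠ o → g ≤ |a o - a j|) {j : ℕ} :
    lam T j = a o ↔ j = {i | a o < a i}.ncard := by
  classical
  have hfin : {i | a o < a i}.Finite :=
    (h.finite_setOf_le ho).subset fun i (hi : a o < a i) => hi.le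
  have hmem : ∀ i, i ∈ hfin.toFinset ↔ a o < a i := fun i => hfin.mem_toFinset
  have hcard : (insert o hfin.toFinset).card = {i | a o < a i}.ncard + 1 := by
    rw [Finset.card_insert_of_notMem (by simp), Set.ncard_eq_toFinset_card _ hfin]
  have hquad := h.hasSum_inner_map_self
  constructor
  · intro hj
    rcases lt_trichotomy j {i | a o < a i}.ncard with hlt | heq | hgt
    · rw [Set.ncard_eq_toFinset_card _ hfin] at hlt
      obtain ⟨s, hs, hsj⟩ := Finset.exists_subset_card_eq hlt
      have hle := le_lam_of_hasSum e.orthonormal hquad (c := a o + g) hsj fun i hi => by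
        have hoi := (hmem i).1 (hs hi)
        rcases le_sub_or_add_le_of_le_abs_sub (hgap i (by rintro rfl; exact hoi.false))
          with h' | h'
        · linarith
        · exact h'
      linarith
    · exact heq
    · have hle := lam_le_of_hasSum e.orthonormal hquad (c := max (a o - g) 0) (hcard.trans_le hgt)
        (le_max_right _ _) fun i hi => by
          simp only [Finset.mem_insert, hmem, not_or, not_lt] at hi
          rcases le_sub_or_add_le_of_le_abs_sub (hgap i hi.1) with h' | h'
          · exact le_max_of_le_left h'
          · linarith
      have : max (a o - g) 0 < a o := max_lt (by linarith) ho
      linarith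
  · rintro rfl
    refine le_antisymm (lam_le_of_hasSum e.orthonormal hquad (s := hfin.toFinset)
      (Set.ncard_eq_toFinset_card _ hfin).ge ho.le fun i hi => ?_)
      (le_lam_of_hasSum e.orthonormal hquad hcard fun i hi => ?_)
    · exact not_lt.1 fun hlt => hi ((hmem i).2 hlt)
    · rcases Finset.mem_insert.1 hi with rfl | hi
      · exact le_rfl
      · exact ((hmem i).1 hi).le

lemma mem_spectrum (h : IsEigenbasis T e a) (i : ι) : a i ∈ spectrum ℝ T := by
  intro hunit
  obtain ⟨C, hC⟩ := hunit.exists_left_inv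
  have : C ((algebraMap ℝ (E →L[ℝ] E) (a i) - T) (e i)) = e i := congrArg (· (e i)) hC
  rw [sub_apply, ContinuousLinearMap.algebraMap_apply, h.map_eq, sub_self, map_zero] at this
  exact e.orthonormal.ne_zero i this.symm

lemma notMem_spectrum (h : IsEigenbasis T e a) {t c : ℝ} (hc : 0 < c) (hta : ∀ i, c ≤ |t - a i|) :
    t ∉ spectrum ℝ T := by
  obtain ⟨C, -, hC⟩ := exists_opNorm_le_inner_hilbertBasis_eq_mul e (c := fun i => (t - a i)⁻¹)
    (inv_nonneg.2 hc.le) fun i => by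
      rw [abs_inv]
      exact inv_anti₀ hc (hta i)
  have hne : ∀ i, t - a i ≠ 0 := fun i => abs_pos.1 (hc.trans_le (hta i))
  have hT : ∀ x i, ⟪e i, (algebraMap ℝ (E →L[ℝ] E) t - T) x⟫ = (t - a i) * ⟪e i, x⟫ := fun x i => by
    rw [sub_apply, inner_sub_right, ContinuousLinearMap.algebraMap_apply, real_inner_smul_right,
      h.inner_map, sub_mul]
  rw [spectrum.notMem_iff, isUnit_iff_exists]
  refine ⟨C, ContinuousLinearMap.ext fun x => ?_, ContinuousLinearMap.ext fun x => ?_⟩ <;>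
    refine eq_of_forall_inner_hilbertBasis_eq e fun i => ?_
  · calc ⟪e i, (algebraMap ℝ (E →L[ℝ] E) t - T) (C x)⟫ = (t - a i) * ((t - a i)⁻¹ * ⟪e i, x⟫) := by
          rw [hT, hC]
      _ = ⟪e i, x⟫ := mul_inv_cancel_left₀ (hne i) _
  · calc ⟪e i, C ((algebraMap ℝ (E →L[ℝ] E) t - T) x)⟫ = (t - a i)⁻¹ * ((t - a i) * ⟪e i, x⟫) := by
          rw [hC, hT]
      _ = ⟪e i, x⟫ := inv_mul_cancel_left₀ (hne i) _

lemma infDist_le_abs_sub (h : IsEigenbasis T e a) {j : ι} (hj : a j ≠ a o) :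
    Metric.infDist (a o) (spectrum ℝ T \ {a o}) ≤ |a o - a j| :=
  have hmem : a j ∈ spectrum ℝ T \ {a o} := ⟨h.mem_spectrum j, hj⟩
  (Metric.infDist_le_dist_of_mem hmem).trans_eq (Real.dist_eq _ _)

lemma exists_pos_forall_le_abs_sub (h : IsEigenbasis T e a) (ho : 0 < a o)
    (hne : ∀ j, j ≠ o → a j ≠ a o) : ∃ c, 0 < c ∧ ∀ j, j ≠ o → c ≤ |a o - a j| := by
  have hlarge : ∀ᶠ c in 𝓝[>] 0, ∀ j ∈ {i | a o / 2 ≤ a i}, j ≠ o → c ≤ |a o - a j| :=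
    (h.finite_setOf_le (half_pos ho)).eventually_all.2 fun j _ => by
      by_cases hj : j = o
      · simp [hj]
      · filter_upwards [Ioo_mem_nhdsGT (abs_pos.2 (sub_ne_zero.2 (hne j hj).symm))] with c hc _
        exact hc.2.le
  obtain ⟨c, hc, hc₀, hco⟩ := (hlarge.and (Ioo_mem_nhdsGT (half_pos ho))).exists
  refine ⟨c, hc₀, fun j hj => ?_⟩
  rcases le_or_gt (a o / 2) (a j) with hle | hlt
  · exact hc j hle hj
  · exact le_abs.2 (.inl (by linarith))

lemma infDist_pos (h : IsEigenbasis T e a) (ho : 0 < a o) (hne : ∀ j, j ≠ o → a j ≠ a o) {j : ι}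
    (hj : j ≠ o) : 0 < Metric.infDist (a o) (spectrum ℝ T \ {a o}) := by
  obtain ⟨c, hc, hca⟩ := h.exists_pos_forall_le_abs_sub ho hne
  have hnonempty : (spectrum ℝ T \ {a o}).Nonempty := ⟨a j, h.mem_spectrum j, hne j hj⟩
  refine hc.trans_le ((Metric.le_infDist hnonempty).2 ?_)
  rintro t ⟨ht, hto⟩
  by_contra! hlt
  rw [Real.dist_eq] at hlt
  refine h.notMem_spectrum (c := min |t - a o| (c - |a o - t|))
    (lt_min (abs_pos.2 (sub_ne_zero.2 hto)) (sub_pos.2 hlt)) (fun i => ?_) ht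
  rcases eq_or_ne i o with rfl | hi
  · exact min_le_left _ _
  · have := abs_sub_le (a o) t (a i)
    exact min_le_of_right_le (by linarith [hca i hi])

end IsEigenbasis

/-! ### From the spectral decomposition to an eigenbasis -/

/-- The constant `A_r(Σ) / 2` in terms of the eigenvalues `a`, the simple one being `a o`. The
term `j = o` vanishes because `0⁻¹ = 0`. -/
def biasCoeff {ι : Type*} (a : ι → ℝ) (o : ι) : ℝ := ∑' j, (a o - a j)⁻¹ ^ 2 * (a j * a o)

section SigmaFin

variable {m : ℕ → ℕ} {b : ℕ → ℝ}

lemma summable_sigma_fin_iff (hb : ∀ s, 0 ≤ b s) :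
    Summable (fun i : Σ s, Fin (m s) => b i.1) ↔ Summable fun s => b s * m s := by
  rw [summable_sigma_of_nonneg fun i => hb i.1]
  simp [Summable.of_finite, mul_comm]

lemma tsum_sigma_fin (hb : ∀ s, 0 ≤ b s) :
    ∑' i : Σ s, Fin (m s), b i.1 = ∑' s, b s * m s := by
  by_cases h : Summable fun i : Σ s, Fin (m s) => b i.1
  · rw [h.tsum_sigma]
    simp [mul_comm]
  · rw [tsum_eq_zero_of_not_summable h,
      tsum_eq_zero_of_not_summable (mt (summable_sigma_fin_iff hb).2 h)]

lemma tsum_comp_extend_sigma_fin {κ : Type*} (f : (Σ s, Fin (m s)) ↪ κ) {F : ℝ → ℝ} (hF₀ : F 0 = 0)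
    (hF : ∀ s, 0 ≤ F (b s)) :
    ∑' j, F (Function.extend f (fun i => b i.1) 0 j) = ∑' s, F (b s) * m s := by
  rw [← tsum_sigma_fin hF, ← tsum_extend_zero f.injective]
  refine tsum_congr fun j => ?_
  rw [Function.apply_extend F, show F ∘ (0 : κ → ℝ) = 0 from funext fun _ => hF₀, Function.comp_def]

end SigmaFin

namespace CovOp

variable (S : CovOp H) {r : ℕ} {θ : H}

/-- The `k`-th vector of an orthonormal basis of the range of `P s`, where `i = ⟨s, k⟩`. -/
def eigenvec (i : Σ s, Fin (S.m s)) : H :=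
  have := S.P_finrank i.1
  (stdOrthonormalBasis ℝ (LinearMap.range (S.P i.1).toLinearMap) i.2 : H)

lemma P_eigenvec_self (i : Σ s, Fin (S.m s)) : S.P i.1 (S.eigenvec i) = S.eigenvec i := by
  have := S.P_finrank i.1
  obtain ⟨y, hy⟩ := (stdOrthonormalBasis ℝ (LinearMap.range (S.P i.1).toLinearMap) i.2).2
  have hy' : S.P i.1 y = S.eigenvec i := hy
  rw [← hy', S.P_idem]

lemma P_eigenvec_of_ne {s : ℕ} {i : Σ s, Fin (S.m s)} (h : s ≠ i.1) :
    S.P s (S.eigenvec i) = 0 := by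
  rw [← S.P_eigenvec_self, S.P_orth s i.1 h]

lemma orthonormal_eigenvec : Orthonormal ℝ S.eigenvec := by
  have := S.P_finrank
  refine ⟨fun i => (stdOrthonormalBasis ℝ _).orthonormal.1 i.2, ?_⟩
  rintro ⟨s, k⟩ ⟨t, l⟩ hne
  rcases eq_or_ne s t with rfl | hst
  · exact (stdOrthonormalBasis ℝ _).orthonormal.2 fun h => hne (congrArg (Sigma.mk s) h)
  · change ⟪S.eigenvec ⟨s, k⟩, S.eigenvec ⟨t, l⟩⟫ = 0
    rw [← S.P_eigenvec_self ⟨s, k⟩, S.P_symm, S.P_eigenvec_of_ne hst, inner_zero_right]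

lemma toCLM_eigenvec (i : Σ s, Fin (S.m s)) :
    S.toCLM (S.eigenvec i) = S.μ i.1 • S.eigenvec i := by
  have hsum := hasSum_single (f := fun s => S.μ s • S.P s (S.eigenvec i)) i.1 fun s hs => by
    rw [S.P_eigenvec_of_ne hs, smul_zero]
  rw [S.P_eigenvec_self] at hsum
  exact (S.decomp _).unique hsum

lemma toCLM_eq_zero {x : H} (hx : ∀ i, ⟪S.eigenvec i, x⟫ = 0) : S.toCLM x = 0 := by
  have hP : ∀ s, S.P s x = 0 := fun s => by
    have := S.P_finrank s
    let b := stdOrthonormalBasis ℝ (LinearMap.range (S.P s).toLinearMap)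
    let y : LinearMap.range (S.P s).toLinearMap := ⟨S.P s x, x, rfl⟩
    suffices y = 0 from congrArg Subtype.val this
    refine InnerProductSpace.ext_inner_left_basis b.toBasis fun k => ?_
    rw [b.coe_toBasis]
    have hk : S.P s (b k) = b k := S.P_eigenvec_self ⟨s, k⟩
    calc ⟪(b k : H), S.P s x⟫ = ⟪(b k : H), x⟫ := by rw [← S.P_symm, hk]
      _ = ⟪(b k : H), 0⟫ := by rw [inner_zero_right]; exact hx ⟨s, k⟩
  exact (S.decomp x).unique (by simpa only [hP, smul_zero] using hasSum_zero)

lemma exists_hilbertBasis_extend_eigenvec :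
    ∃ (w : Set H) (e : HilbertBasis w ℝ H) (f : (Σ s, Fin (S.m s)) ↪ w),
      ∀ i, e (f i) = S.eigenvec i := by
  obtain ⟨w, e, hw, he⟩ := S.orthonormal_eigenvec.toSubtypeRange.exists_hilbertBasis_extension
  refine ⟨w, e, ⟨fun i => ⟨S.eigenvec i, hw ⟨i, rfl⟩⟩, fun i j h => ?_⟩, fun i => by rw [he]; rfl⟩
  exact S.orthonormal_eigenvec.linearIndependent.injective (congrArg Subtype.val h)

lemma isEigenbasis_extend {w : Type*} {e : HilbertBasis w ℝ H} {f : (Σ s, Fin (S.m s)) ↪ w}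
    (hf : ∀ i, e (f i) = S.eigenvec i) :
    IsEigenbasis S.toCLM e (Function.extend f (fun i => S.μ i.1) 0) where
  map_eq j := by
    by_cases hj : j ∈ range f
    · obtain ⟨i, rfl⟩ := hj
      rw [hf, S.toCLM_eigenvec, f.injective.extend_apply]
    · rw [Function.extend_apply' _ _ _ hj, Pi.zero_apply, zero_smul]
      refine S.toCLM_eq_zero fun i => ?_
      rw [← hf]
      exact e.orthonormal.inner_eq_zero fun h => hj ⟨i, h⟩
  nonneg j := by
    by_cases hj : j ∈ range f
    · obtain ⟨i, rfl⟩ := hj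
      rw [f.injective.extend_apply]
      exact (S.μ_pos _).le
    · rw [Function.extend_apply' _ _ _ hj, Pi.zero_apply]
  summable := (summable_extend_zero f.injective).2 <|
    (summable_sigma_fin_iff fun s => (S.μ_pos s).le).2 S.μm_summable

variable {S}

lemma SimpleVec.m_eq_one (hθ : S.SimpleVec r θ) : S.m r = 1 := by
  have hθ₀ : θ ≠ 0 := norm_ne_zero_iff.1 (by rw [hθ.1]; exact one_ne_zero)
  have hrange : LinearMap.range (S.P r).toLinearMap = Submodule.span ℝ {θ} := by
    refine le_antisymm ?_ ((Submodule.span_singleton_le_iff_mem _ _).2 ⟨θ, ?_⟩)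
    · rintro - ⟨x, rfl⟩
      exact Submodule.mem_span_singleton.2 ⟨⟪θ, x⟫, (hθ.2 x).symm⟩
    · exact (hθ.2 θ).trans (by rw [real_inner_self_eq_norm_sq, hθ.1, one_pow, one_smul])
  rw [m, hrange, finrank_span_singleton hθ₀]

lemma SimpleVec.inner_eigenvec_sq (hθ : S.SimpleVec r θ) (k : Fin (S.m r)) (v : H) :
    ⟪v, S.eigenvec ⟨r, k⟩⟫ ^ 2 = ⟪v, θ⟫ ^ 2 := by
  have hu := hθ.2 (S.eigenvec ⟨r, k⟩)
  rw [S.P_eigenvec_self ⟨r, k⟩] at hu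
  have hnorm := S.orthonormal_eigenvec.1 ⟨r, k⟩
  rw [hu, norm_smul, hθ.1, mul_one, Real.norm_eq_abs] at hnorm
  rw [hu, real_inner_smul_right, mul_pow, ← sq_abs ⟪θ, _⟫, hnorm, one_pow, one_mul]

theorem SimpleVec.exists_isEigenbasis (hθ : S.SimpleVec r θ) :
    ∃ (w : Set H) (e : HilbertBasis w ℝ H) (a : w → ℝ) (o : w), IsEigenbasis S.toCLM e a ∧
      a o = S.μ r ∧ (∀ j, j ≠ o → a j ≠ a o) ∧ (∀ v, ⟪v, e o⟫ ^ 2 = ⟪v, θ⟫ ^ 2) ∧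
      ∑' j, a j = S.trace ∧ biasCoeff a o = S.Ar r / 2 := by
  obtain ⟨w, e, f, hf⟩ := S.exists_hilbertBasis_extend_eigenvec
  have := Fin.subsingleton_iff_le_one.2 hθ.m_eq_one.le
  let k : Fin (S.m r) := ⟨0, hθ.m_eq_one ▸ one_pos⟩
  have hμ : ∀ i, Function.extend f (fun i => S.μ i.1) 0 (f i) = S.μ i.1 :=
    f.injective.extend_apply _ _
  refine ⟨w, e, _, f ⟨r, k⟩, S.isEigenbasis_extend hf, hμ _, fun j hj => ?_,
    fun v => by rw [hf, hθ.inner_eigenvec_sq], ?_, ?_⟩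
  · by_cases hjf : j ∈ range f
    · obtain ⟨⟨s, l⟩, rfl⟩ := hjf
      rw [hμ, hμ]
      intro h
      obtain rfl : s = r := S.μ_anti.injective h
      exact hj (by rw [Subsingleton.elim l k])
    · rw [hμ, Function.extend_apply' _ _ _ hjf]
      exact (S.μ_pos r).ne
  · exact tsum_comp_extend_sigma_fin f (F := id) rfl fun s => (S.μ_pos s).le
  · rw [biasCoeff, hμ, tsum_comp_extend_sigma_fin f
      (F := fun t => (S.μ r - t)⁻¹ ^ 2 * (t * S.μ r)) (by simp)
      fun s => mul_nonneg (sq_nonneg _) (mul_nonneg (S.μ_pos s).le (S.μ_pos r).le),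
      Ar, mul_div_cancel_left₀ _ two_ne_zero]
    refine tsum_congr fun s => ?_
    split_ifs with hs
    · simp [hs]
    · rw [inv_pow]
      ring

end CovOp

/-! ### Measurable well-orders -/

section MeasurableWellOrder

variable {I : Type*} [LinearOrder I] [MeasurableSpace I] {R : Set (I × I)}

lemma eq_zero_of_ae_measure_Iio_eq_zero {m : Measure I} [SFinite m] [NullSingletonClass m]
    (hR : MeasurableSet R) (hR_iff : ∀ i k, i ≠ k → ((i, k) ∈ R ↔ i < k))
    (hm : ∀ᵐ k ∂m, m (Iio k) = 0) : m = 0 := by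
  have hIic : ∀ᵐ k ∂m, m (Iic k) = 0 := by
    filter_upwards [hm] with k hk
    rwa [← measure_congr Iio_ae_eq_Iic]
  have hswap : (m.prod m) (Prod.swap ⁻¹' R) = 0 := by
    rw [Measure.measure_prod_null (measurable_swap hR)]
    filter_upwards [hIic] with k hk
    refine measure_mono_null (fun i hi => ?_) hk
    rcases eq_or_ne i k with rfl | hik
    · exact mem_Iic.2 le_rfl
    · exact ((hR_iff i k hik).1 hi).le
  have hnull : (m.prod m) R = 0 := by
    rwa [← Measure.prod_swap, Measure.map_apply measurable_swap hR]
  by_contra hne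
  have : NeBot (ae m) := ae_neBot.2 hne
  obtain ⟨k, hk, hRk⟩ := (hIic.and (Measure.measure_ae_null_of_prod_null hnull)).exists
  refine hne (Measure.measure_univ_eq_zero.1 (measure_mono_null ?_ (measure_union_null hk hRk)))
  exact fun i _ => (le_or_gt i k).imp id fun hki => (hR_iff k i hki.ne).2 hki

variable [WellFoundedLT I] [DiscreteMeasurableSpace I]

theorem eq_zero_of_measurableSet_lt {m : Measure I} [SFinite m] [NullSingletonClass m]
    (hR : MeasurableSet R) (hR_iff : ∀ i k, i ≠ k → ((i, k) ∈ R ↔ i < k)) : m = 0 := by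
  have hIio : ∀ i, m (Iio i) = 0 := fun i => by
    induction i using WellFoundedLT.induction with
    | _ i ih =>
      rw [← Measure.restrict_eq_zero]
      refine eq_zero_of_ae_measure_Iio_eq_zero hR hR_iff ?_
      filter_upwards [ae_restrict_mem (MeasurableSet.of_discrete (s := Iio i))] with k hk
      exact le_zero_iff.1 ((Measure.restrict_apply_le _ _).trans (ih k hk).le)
  exact eq_zero_of_ae_measure_Iio_eq_zero hR hR_iff (.of_forall hIio)

end MeasurableWellOrder

section CoordMeasure

variable {I : Type*} [MeasurableSpace I] [DiscreteMeasurableSpace I] {e : I → E}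

/-- The measure on the index set giving `i` the mass `⟪x, e i⟫ ^ 2 / (1 + ‖x‖ ^ 2)`; averaging it
over a random `x` turns statements about the coordinates of `x` into statements about `I`. The
denominator makes the total mass at most one when `e` is orthonormal. -/
def coordMeasure (e : I → E) (x : E) : Measure I :=
  Measure.count.withDensity fun i => ENNReal.ofReal (⟪x, e i⟫ ^ 2 / (1 + ‖x‖ ^ 2))

lemma coordMeasure_apply (x : E) (s : Set I) :
    coordMeasure e x s =
      ∑' i, s.indicator (fun i => ENNReal.ofReal (⟪x, e i⟫ ^ 2 / (1 + ‖x‖ ^ 2))) i := by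
  rw [coordMeasure, withDensity_apply _ .of_discrete, ← lintegral_indicator .of_discrete,
    lintegral_count]

lemma coordMeasure_singleton_eq_zero_iff {x : E} {i : I} :
    coordMeasure e x {i} = 0 ↔ ⟪x, e i⟫ = 0 := by
  have hpos : 0 < 1 + ‖x‖ ^ 2 := by positivity
  rw [coordMeasure, withDensity_apply _ .of_discrete, lintegral_singleton, Measure.count_singleton,
    mul_one, ENNReal.ofReal_eq_zero, div_le_iff₀ hpos, zero_mul, sq_nonpos_iff]

lemma coordMeasure_univ_le_one (he : Orthonormal ℝ e) (x : E) : coordMeasure e x univ ≤ 1 := by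
  have hpos : 0 < 1 + ‖x‖ ^ 2 := by positivity
  rw [coordMeasure_apply, indicator_univ]
  refine ENNReal.summable.tsum_le_of_sum_le fun s => ?_
  rw [← ENNReal.ofReal_sum_of_nonneg fun i _ => by positivity, ← ENNReal.ofReal_one,
    ← Finset.sum_div]
  refine ENNReal.ofReal_le_ofReal ((div_le_one hpos).2 ?_)
  have hbessel := he.sum_inner_products_le (s := s) x
  simp only [Real.norm_eq_abs, sq_abs, real_inner_comm] at hbessel
  linarith

variable [MeasurableSpace E] [BorelSpace E]

lemma measurable_coordMeasure (e : I → E) : Measurable (coordMeasure e) := by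
  refine Measure.measurable_of_measurable_coe _ fun s _ => ?_
  simp_rw [coordMeasure_apply]
  refine (lowerSemicontinuous_tsum fun i => Continuous.lowerSemicontinuous ?_).measurable
  by_cases hi : i ∈ s
  · simp only [indicator_of_mem hi]
    refine ENNReal.continuous_ofReal.comp (Continuous.div (by fun_prop) (by fun_prop) fun x => ?_)
    positivity
  · simp only [indicator_of_notMem hi]
    exact continuous_const

theorem ae_forall_inner_eq_zero_of_measurableSet_lt [LinearOrder I] [WellFoundedLT I]
    {R : Set (I × I)} (hR : MeasurableSet R) (hR_iff : ∀ i k, i ≠ k → ((i, k) ∈ R ↔ i < k))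
    {ν : Measure E} [IsFiniteMeasure ν] (he : Orthonormal ℝ e)
    (hν : ∀ i, ∀ᵐ x ∂ν, ⟪x, e i⟫ = 0) : ∀ᵐ x ∂ν, ∀ i, ⟪x, e i⟫ = 0 := by
  have hmeas := measurable_coordMeasure e
  have hmeas_apply : ∀ s, Measurable fun x => coordMeasure e x s := fun s =>
    (Measure.measurable_coe .of_discrete).comp hmeas
  let m := ν.bind (coordMeasure e)
  have hm : ∀ s, m s = ∫⁻ x, coordMeasure e x s ∂ν := fun s =>
    Measure.bind_apply .of_discrete hmeas.aemeasurable
  have : IsFiniteMeasure m := ⟨calc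
    m univ ≤ ∫⁻ _, 1 ∂ν := (hm univ).trans_le (lintegral_mono (coordMeasure_univ_le_one he))
    _ < ∞ := by simp⟩
  have : NullSingletonClass m := ⟨fun i => by
    rw [hm, lintegral_eq_zero_iff (hmeas_apply _)]
    filter_upwards [hν i] with x hx
    exact coordMeasure_singleton_eq_zero_iff.2 hx⟩
  have hm₀ := hm univ
  rw [eq_zero_of_measurableSet_lt (m := m) hR hR_iff, Measure.coe_zero, Pi.zero_apply, eq_comm,
    lintegral_eq_zero_iff (hmeas_apply _)] at hm₀
  filter_upwards [hm₀] with x hx i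
  exact coordMeasure_singleton_eq_zero_iff.1 (measure_mono_null (subset_univ _) hx)

end CoordMeasure

/-! ### Designed samples and the kernel of the covariance operator -/

section Design

variable {ι : Type*} {B : Finset ι} {n : ℕ}

/-- A sample whose nonzero points are `e o + e i`, `e o + 2 e k` and `3 e b` for `b ∈ B`, listed
along the injection `f`. No point involves both `i` and `k`, which makes the sample measurable in
`(i, k)` although addition need not be measurable on a nonseparable space. -/
def designSample (e : ι → E) (o : ι) (f : Bool ⊕ B ↪ Fin n) (i k : ι) : Fin n → E :=
  Function.extend f
    (Sum.elim (Bool.rec (e o + (2 : ℝ) • e k) (e o + e i)) fun b => (3 : ℝ) • e b) 0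

/-- The indices entering `designSample` are pairwise distinct. -/
structure IsDesign (o i k : ι) (B : Finset ι) : Prop where
  fst_ne : i ≠ o
  snd_ne : k ≠ o
  fst_ne_snd : i ≠ k
  notMem : o ∉ B
  fst_notMem : i ∉ B
  snd_notMem : k ∉ B

variable {o i k : ι} (f : Bool ⊕ B ↪ Fin n)

lemma inner_sampleCov_designSample (e : ι → E) (u w : E) :
    ⟪sampleCov (designSample e o f i k) u, w⟫ =
      (n : ℝ)⁻¹ * ((⟪e o, u⟫ + ⟪e i, u⟫) * (⟪e o, w⟫ + ⟪e i, w⟫) +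
        (⟪e o, u⟫ + 2 * ⟪e k, u⟫) * (⟪e o, w⟫ + 2 * ⟪e k, w⟫) +
        9 * ∑ b ∈ B, ⟪e b, u⟫ * ⟪e b, w⟫) := by
  rw [inner_sampleCov, ← Fintype.sum_of_injective f f.injective
    (fun c => ⟪designSample e o f i k (f c), u⟫ * ⟪designSample e o f i k (f c), w⟫)
    _ (fun l hl => ?_) fun _ => rfl]
  · simp only [designSample, f.injective.extend_apply, Fintype.sum_sum_type, Fintype.sum_bool,
      Sum.elim_inl, Sum.elim_inr, inner_add_left, real_inner_smul_left, Finset.mul_sum,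
      ← Finset.sum_coe_sort B]
    congr 2
    exact Finset.sum_congr rfl fun b _ => by ring
  · rw [designSample, Function.extend_apply' _ _ _ hl, Pi.zero_apply, inner_zero_left, zero_mul]

lemma measurable_designSample {J : Type*} [MeasurableSpace J] [DiscreteMeasurableSpace J]
    [MeasurableSpace E] (e : ι → E) (s : J → ι) :
    Measurable fun z : J × J => designSample e o f (s z.1) (s z.2) := by
  refine measurable_pi_iff.2 fun l => ?_
  by_cases hl : ∃ c, f c = l
  · obtain ⟨c, rfl⟩ := hl
    simp only [designSample, f.injective.extend_apply]
    rcases c with (_ | _) | b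
    · exact (Measurable.of_discrete (f := fun k => e o + (2 : ℝ) • e (s k))).comp measurable_snd
    · exact (Measurable.of_discrete (f := fun i => e o + e (s i))).comp measurable_fst
    · exact measurable_const
  · simp only [designSample, Function.extend_apply' _ _ _ hl]
    exact measurable_const

variable {e : ι → E}

lemma le_lam_sampleCov_designSample (he : Orthonormal ℝ e) (h : IsDesign o i k B) :
    (n : ℝ)⁻¹ * 4 ≤ lam (sampleCov (designSample e o f i k)) B.card := by
  refine le_lam_of_orthonormal he (s := B.cons k h.snd_notMem) (Finset.card_cons _)
    fun x hout hnorm => ?_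
  have ho : ⟪e o, x⟫ = 0 := hout o (by simp [h.snd_ne.symm, h.notMem])
  rw [Finset.sum_cons] at hnorm
  rw [inner_sampleCov_designSample, ho]
  simp only [← sq]
  have hB : 0 ≤ ∑ b ∈ B, ⟪e b, x⟫ ^ 2 := by positivity
  gcongr
  nlinarith [sq_nonneg ⟪e i, x⟫]

lemma lam_sampleCov_designSample_le (he : Orthonormal ℝ e) (h : IsDesign o i k B) :
    lam (sampleCov (designSample e o f i k)) B.card ≤ (n : ℝ)⁻¹ * 7 := by
  refine lam_le (fun b : B => e b) (Fintype.card_coe B).le (by positivity) fun x hB hx => ?_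
  have hsum : ∑ b ∈ B, ⟪e b, x⟫ * ⟪e b, x⟫ = 0 :=
    Finset.sum_eq_zero fun b hb => by rw [hB ⟨b, hb⟩, zero_mul]
  have hbessel := he.sum_inner_products_le (s := .cons o (.cons i {k} (by simp [h.fst_ne_snd]))
    (by simp [h.fst_ne.symm, h.snd_ne.symm])) x
  simp only [Finset.sum_cons, Finset.sum_singleton, Real.norm_eq_abs, sq_abs, hx] at hbessel
  rw [inner_sampleCov_designSample, hsum]
  gcongr
  nlinarith [sq_nonneg (⟪e o, x⟫ - ⟪e i, x⟫), sq_nonneg (2 * ⟪e o, x⟫ - ⟪e k, x⟫),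
    sq_nonneg ⟪e i, x⟫, sq_nonneg ⟪e k, x⟫, sq_nonneg ⟪e o, x⟫]

lemma abs_pos_and_abs_lt_abs_of_design_eqs {L t p q : ℝ} (hL : 4 ≤ L)
    (ht : L * t = 2 * t + p + 2 * q) (hp : L * p = t + p) (hq : L * q = 2 * t + 4 * q)
    (hne : ¬(t = 0 ∧ p = 0 ∧ q = 0)) :
    0 < |p| ∧ |p| < |q| := by
  have ht₀ : t ≠ 0 := fun h => by
    have hp₀ : p = 0 := by nlinarith
    exact hne ⟨h, hp₀, by rw [h, hp₀] at ht; linarith⟩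
  have hL' : 0 < L - 4 := by
    refine sub_pos.2 (hL.lt_of_ne fun h => ht₀ ?_)
    rw [← h] at hq
    linarith
  have hp₀ : 0 < |p| := abs_pos.2 fun h => ht₀ (by rw [h] at hp; linarith)
  have hpq : |q| * (L - 4) = |p| * (2 * (L - 1)) := by
    rw [← abs_of_pos hL', ← abs_of_pos (show 0 < 2 * (L - 1) by linarith), ← abs_mul, ← abs_mul]
    congr 1
    linarith
  exact ⟨hp₀, by nlinarith⟩

lemma design_eqs (he : Orthonormal ℝ e) (h : IsDesign o i k B) {v : E} {L : ℝ}
    (hv : sampleCov (designSample e o f i k) v = ((n : ℝ)⁻¹ * L) • v) :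
    L * ⟪e o, v⟫ = 2 * ⟪e o, v⟫ + ⟪e i, v⟫ + 2 * ⟪e k, v⟫ ∧
      L * ⟪e i, v⟫ = ⟪e o, v⟫ + ⟪e i, v⟫ ∧ L * ⟪e k, v⟫ = 2 * ⟪e o, v⟫ + 4 * ⟪e k, v⟫ ∧
      (∀ j ∈ B, L * ⟪e j, v⟫ = 9 * ⟪e j, v⟫) ∧
      ∀ j ∉ B, j ≠ o → j ≠ i → j ≠ k → L * ⟪e j, v⟫ = 0 := by
  have hn : (n : ℝ)⁻¹ ≠ 0 := inv_ne_zero (Nat.cast_ne_zero.2 (f (.inl true)).pos.ne')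
  classical
  have heq : ∀ j, L * ⟪e j, v⟫ =
      (⟪e o, v⟫ + ⟪e i, v⟫) * ((if o = j then 1 else 0) + if i = j then 1 else 0) +
      (⟪e o, v⟫ + 2 * ⟪e k, v⟫) * ((if o = j then 1 else 0) + 2 * if k = j then 1 else 0) +
      9 * if j ∈ B then ⟪e j, v⟫ else 0 := fun j => by
    have hj := inner_sampleCov_designSample (i := i) (k := k) (o := o) f e v (e j)
    rw [hv, real_inner_smul_left, mul_assoc, real_inner_comm] at hj
    simpa only [orthonormal_iff_ite.1 he, mul_ite, mul_one, mul_zero, Finset.sum_ite_eq'] using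
      mul_left_cancel₀ hn hj
  refine ⟨?_, ?_, ?_, fun j hj => ?_, fun j hj hjo hji hjk => ?_⟩
  · rw [heq o]
    simp only [h.fst_ne, h.snd_ne, h.notMem, if_true, if_false]
    ring
  · rw [heq i]
    simp [h.fst_ne.symm, h.fst_ne_snd.symm, h.fst_notMem]
  · rw [heq k]
    simp only [h.snd_ne.symm, h.fst_ne_snd, h.snd_notMem, if_true, if_false]
    ring
  · have hne : o ≠ j ∧ i ≠ j ∧ k ≠ j :=
      ⟨fun h' => h.notMem (h' ▸ hj), fun h' => h.fst_notMem (h' ▸ hj),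
        fun h' => h.snd_notMem (h' ▸ hj)⟩
    rw [heq j]
    simp [hne, hj]
  · rw [heq j]
    simp [hjo.symm, hji.symm, hjk.symm, hj]

theorem eigenvector_sampleCov_designSample (e : HilbertBasis ι ℝ E) (h : IsDesign o i k B) {v : E}
    (hv : v ≠ 0) (hDv : sampleCov (designSample e o f i k) v =
      lam (sampleCov (designSample e o f i k)) B.card • v) :
    (∀ j, j ≠ o → j ≠ i → j ≠ k → ⟪e j, v⟫ = 0) ∧ 0 < |⟪e i, v⟫| ∧ |⟪e i, v⟫| < |⟪e k, v⟫| := by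
  have hn : (0 : ℝ) < n := Nat.cast_pos.2 (f (.inl true)).pos
  have hle := le_lam_sampleCov_designSample f e.orthonormal h
  have hge := lam_sampleCov_designSample_le f e.orthonormal h
  obtain ⟨L, hL⟩ : ∃ L, lam (sampleCov (designSample e o f i k)) B.card = (n : ℝ)⁻¹ * L :=
    ⟨n * lam (sampleCov (designSample e o f i k)) B.card, by field_simp⟩
  rw [hL] at hle hge hDv
  have hL₄ : 4 ≤ L := le_of_mul_le_mul_left hle (by positivity)
  have hL₇ : L ≤ 7 := le_of_mul_le_mul_left hge (by positivity)
  obtain ⟨ho, hi, hk, hB, hout⟩ := design_eqs f e.orthonormal h hDv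
  have hzero : ∀ j, j ≠ o → j ≠ i → j ≠ k → ⟪e j, v⟫ = 0 := fun j hjo hji hjk => by
    by_cases hj : j ∈ B
    · nlinarith [hB j hj]
    · nlinarith [hout j hj hjo hji hjk]
  refine ⟨hzero, abs_pos_and_abs_lt_abs_of_design_eqs hL₄ ho hi hk fun h₀ => hv ?_⟩
  refine eq_of_forall_inner_hilbertBasis_eq e fun j => ?_
  rw [inner_zero_right]
  by_cases hj : j = o ∨ j = i ∨ j = k
  · rcases hj with rfl | rfl | rfl
    exacts [h₀.1, h₀.2.1, h₀.2.2]
  · push Not at hj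
    exact hzero j hj.1 hj.2.1 hj.2.2

end Design

section Kernel

/-- The vectors whose modulus of coordinates, over the family `e`, increases strictly and from a
nonzero value between some pair of indices in increasing order. -/
def ascentSet {I : Type*} [LT I] (e : I → E) : Set E :=
  ⋃ (i) (k) (_ : i < k), {v | 0 < |⟪e i, v⟫| ∧ |⟪e i, v⟫| < |⟪e k, v⟫|}

lemma isOpen_ascentSet {I : Type*} [LT I] (e : I → E) : IsOpen (ascentSet e) :=
  by
  refine isOpen_iUnion fun i => isOpen_iUnion fun k => isOpen_iUnion fun _ => ?_
  have hpos : IsOpen {v | 0 < |⟪e i, v⟫|} := isOpen_lt (by fun_prop) (by fun_prop)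
  have hlt : IsOpen {v | |⟪e i, v⟫| < |⟪e k, v⟫|} := isOpen_lt (by fun_prop) (by fun_prop)
  exact hpos.inter hlt

lemma mem_ascentSet_iff {I : Type*} [LinearOrder I] {e : I → E} {v : E} {i k : I}
    (hzero : ∀ j, j ≠ i → j ≠ k → ⟪e j, v⟫ = 0) (hi : 0 < |⟪e i, v⟫|)
    (hik : |⟪e i, v⟫| < |⟪e k, v⟫|) : v ∈ ascentSet e ↔ i < k := by
  simp only [ascentSet, mem_iUnion, mem_ofPred_eq]
  refine ⟨fun ⟨i', k', hlt, hi', hik'⟩ => ?_, fun hlt => ⟨i, k, hlt, hi, hik⟩⟩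
  have hmem : ∀ j, 0 < |⟪e j, v⟫| → j = i ∨ j = k := fun j hj => by
    by_contra! hne
    exact (abs_pos.1 hj) (hzero j hne.1 hne.2)
  rcases hmem i' hi' with rfl | rfl <;> rcases hmem k' (hi'.trans hik') with rfl | rfl
  exacts [(lt_irrefl _ hlt).elim, hlt, (hik.asymm hik').elim, (lt_irrefl _ hlt).elim]

variable {ι : Type*} {e : HilbertBasis ι ℝ E} {T : E →L[ℝ] E} {a : ι → ℝ} [MeasurableSpace E]
  [BorelSpace E] {ν : Measure E}

lemma IsGaussian.ae_inner_eq_zero (hν : IsGaussian ν T) {u : E} (hu : T u = 0) :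
    ∀ᵐ x ∂ν, ⟪x, u⟫ = 0 := by
  have hmap := hν.2 u
  rw [hu, inner_zero_left, Real.toNNReal_zero, gaussianReal_zero_var] at hmap
  refine ae_of_ae_map (f := fun x => ⟪x, u⟫) (p := (· = 0)) (by fun_prop) ?_
  rw [hmap]
  exact (ae_dirac_iff (measurableSet_singleton 0)).2 rfl

theorem IsGaussian.ae_forall_inner_eq_zero_of_measurable (hν : IsGaussian ν T)
    (h : IsEigenbasis T e a) {o : ι} (ho : a o ≠ 0) {B : Finset ι} (hB : ∀ b ∈ B, a b ≠ 0)
    (hoB : o ∉ B) {n : ℕ} (hn : B.card + 2 ≤ n) {est : (Fin n → E) → E} (hest : Measurable est)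
    (hnorm : ∀ x, ‖est x‖ = 1)
    (heigen : ∀ x, sampleCov x (est x) = lam (sampleCov x) B.card • est x) :
    ∀ᵐ x ∂ν, ∀ i, a i = 0 → ⟪x, e i⟫ = 0 := by
  have := hν.1
  let I := {i // a i = 0}
  obtain ⟨_, _⟩ := exists_wellFoundedLT I
  let _ : MeasurableSpace I := ⊤
  have : DiscreteMeasurableSpace I := ⟨fun _ => trivial⟩
  obtain ⟨f⟩ : Nonempty (Bool ⊕ B ↪ Fin n) :=
    Function.Embedding.nonempty_of_card_le (by simpa [add_comm] using hn)
  have hdesign : ∀ {i k : I}, i ≠ k → IsDesign o i.1 k.1 B := fun {i k} hik =>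
    ⟨fun h' => ho (h' ▸ i.2), fun h' => ho (h' ▸ k.2), fun h' => hik (Subtype.ext h'), hoB,
      fun h' => hB _ h' i.2, fun h' => hB _ h' k.2⟩
  let D := fun z : I × I => designSample e o f z.1 z.2
  have hD : Measurable D := measurable_designSample f e Subtype.val
  have hae := ae_forall_inner_eq_zero_of_measurableSet_lt (ν := ν)
    (e := fun i : I => e i) (R := (est ∘ D) ⁻¹' ascentSet fun i : I => e i)
    ((hest.comp hD) (isOpen_ascentSet _).measurableSet) (fun i k hik => ?_)
    (e.orthonormal.comp _ Subtype.val_injective)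
    fun i => hν.ae_inner_eq_zero (by rw [h.map_eq, i.2, zero_smul])
  · filter_upwards [hae] with x hx i hi using hx ⟨i, hi⟩
  · obtain ⟨hzero, hi, hlt⟩ := eigenvector_sampleCov_designSample f e (hdesign hik)
      (norm_ne_zero_iff.1 ((hnorm _).symm ▸ one_ne_zero)) (heigen (D (i, k)))
    refine mem_ascentSet_iff (fun j hji hjk => hzero j (fun h' => ho (h' ▸ j.2)) ?_ ?_) hi hlt
    exacts [fun h' => hji (Subtype.ext h'), fun h' => hjk (Subtype.ext h')]

end Kernel

/-! ### The bias of the empirical eigenvector -/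

section EigenbasisBounds

variable {T : E →L[ℝ] E} {ι : Type*} {e : HilbertBasis ι ℝ E} {a : ι → ℝ} {o : ι} {g : ℝ}

namespace IsEigenbasis

lemma apply_le_opNorm (h : IsEigenbasis T e a) (i : ι) : a i ≤ ‖T‖ := by
  have hle := T.le_opNorm (e i)
  rw [h.map_eq, norm_smul, e.orthonormal.1 i, mul_one, mul_one] at hle
  exact (le_abs_self _).trans hle

lemma opNorm_le_tsum (h : IsEigenbasis T e a) : ‖T‖ ≤ ∑' i, a i := by
  have hsum : 0 ≤ ∑' i, a i := tsum_nonneg h.nonneg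
  refine T.opNorm_le_bound hsum fun x => le_of_sq_le_sq ?_ (by positivity)
  rw [mul_pow]
  refine hasSum_le (fun i => ?_) (hasSum_inner_sq e (T x)) ((hasSum_inner_sq e x).mul_left _)
  rw [h.inner_map, mul_pow]
  gcongr
  exacts [h.nonneg i, h.summable.le_tsum i fun j _ => h.nonneg j]

lemma abs_sub_le_opNorm (h : IsEigenbasis T e a) (i j : ι) : |a i - a j| ≤ ‖T‖ :=
  abs_le.2 ⟨by linarith [h.nonneg i, h.apply_le_opNorm j],
    by linarith [h.nonneg j, h.apply_le_opNorm i]⟩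

lemma card_mul_le_tsum (h : IsEigenbasis T e a) {s : Finset ι} {c : ℝ} (hs : ∀ i ∈ s, c ≤ a i) :
    s.card * c ≤ ∑' i, a i := by
  rw [← nsmul_eq_mul]
  exact (s.card_nsmul_le_sum a c hs).trans (h.summable.sum_le_tsum s fun i _ => h.nonneg i)

lemma biasCoeff_nonneg (h : IsEigenbasis T e a) (o : ι) : 0 ≤ biasCoeff a o :=
  tsum_nonneg fun j => mul_nonneg (sq_nonneg _) (mul_nonneg (h.nonneg j) (h.nonneg o))

lemma biasCoeff_le (h : IsEigenbasis T e a) (hg : 0 < g) (hgap : ∀ j, j ≠ o → g ≤ |a o - a j|) :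
    biasCoeff a o ≤ g⁻¹ ^ 2 * ‖T‖ * ∑' j, a j := by
  have hterm : ∀ j, (a o - a j)⁻¹ ^ 2 * (a j * a o) ≤ g⁻¹ ^ 2 * ‖T‖ * a j := fun j =>
    calc (a o - a j)⁻¹ ^ 2 * (a j * a o) = |(a o - a j)⁻¹| ^ 2 * (a o * a j) := by
          rw [sq_abs, mul_comm (a o)]
      _ ≤ g⁻¹ ^ 2 * (‖T‖ * a j) := by
          have := h.nonneg j
          gcongr
          exacts [mul_nonneg (h.nonneg o) this, abs_inv_sub_le hg hgap j, h.apply_le_opNorm o]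
      _ = g⁻¹ ^ 2 * ‖T‖ * a j := (mul_assoc _ _ _).symm
  rw [biasCoeff, ← tsum_mul_left]
  refine (Summable.of_nonneg_of_le (fun j => ?_) hterm ?_).tsum_le_tsum hterm ?_
  exacts [mul_nonneg (sq_nonneg _) (mul_nonneg (h.nonneg j) (h.nonneg o)),
    h.summable.mul_left _, h.summable.mul_left _]

end IsEigenbasis

end EigenbasisBounds

section Overlap

lemma inner_sq_le_one {u v : E} (hu : ‖u‖ = 1) (hv : ‖v‖ = 1) : ⟪u, v⟫ ^ 2 ≤ 1 := by
  have hle := abs_real_inner_le_norm u v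
  rw [hu, hv, mul_one] at hle
  exact (sq_le_one_iff_abs_le_one _).2 hle

variable {Ω : Type*} [MeasurableSpace Ω] {P : Measure Ω} [IsProbabilityMeasure P] {v : Ω → E}
  {θ : E}

lemma integral_inner_sq_le_one (hθ : ‖θ‖ = 1) (hv : ∀ x, ‖v x‖ = 1) :
    ∫ x, ⟪v x, θ⟫ ^ 2 ∂P ≤ 1 := by
  simpa using integral_mono_of_nonneg (μ := P) (.of_forall fun x => sq_nonneg _)
    (integrable_const (1 : ℝ)) (.of_forall fun x => inner_sq_le_one (hv x) hθ)

lemma integrable_inner_sq [MeasurableSpace E] [BorelSpace E] (hθ : ‖θ‖ = 1) (hv : Measurable v)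
    (hv_norm : ∀ x, ‖v x‖ = 1) : Integrable (fun x => ⟪v x, θ⟫ ^ 2) P := by
  have hmeas : Measurable fun u : E => ⟪u, θ⟫ ^ 2 := by fun_prop
  refine .of_bound (hmeas.comp hv).aestronglyMeasurable 1 (.of_forall fun x => ?_)
  rw [Real.norm_eq_abs, abs_of_nonneg (sq_nonneg _)]
  exact inner_sq_le_one (hv_norm x) hθ

lemma abs_integral_sub_one_add_integral_le {X Z W : Ω → ℝ} {c D : ℝ} (hX : Integrable X P)
    (hZ : Integrable Z P) (hc : 0 ≤ c) (hD : 0 ≤ D) (hW : ∀ x, |X x - 1 + Z x| ≤ c * W x)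
    (hWD : ∫⁻ x, ENNReal.ofReal (W x) ∂P ≤ ENNReal.ofReal D) :
    |∫ x, X x ∂P - 1 + ∫ x, Z x ∂P| ≤ c * D := by
  have hint : ∫ x, (X x - 1 + Z x) ∂P = ∫ x, X x ∂P - 1 + ∫ x, Z x ∂P := by
    rw [integral_add (f := fun x => X x - 1) (hX.sub (integrable_const 1)) hZ,
      integral_sub hX (integrable_const 1), integral_const, probReal_univ, one_smul]
  rw [← hint, ← Real.norm_eq_abs]
  refine (norm_integral_le_lintegral_norm _).trans
    (ENNReal.toReal_le_of_le_ofReal (by positivity) ?_)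
  calc ∫⁻ x, ENNReal.ofReal ‖X x - 1 + Z x‖ ∂P
      ≤ ∫⁻ x, ENNReal.ofReal c * ENNReal.ofReal (W x) ∂P := lintegral_mono fun x => by
        rw [← ENNReal.ofReal_mul hc]
        exact ENNReal.ofReal_le_ofReal (hW x)
    _ ≤ ENNReal.ofReal (c * D) := by
        rw [lintegral_const_mul' _ _ ENNReal.ofReal_ne_top, ENNReal.ofReal_mul hc]
        gcongr

end Overlap

section Bias

variable {ι : Type*} {a : ι → ℝ} {o : ι} {g R : ℝ} {n : ℕ}

lemma IsEigenbasis.abs_integral_inner_sq_sub_one_add_le_of_one_le {T : E →L[ℝ] E}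
    {e : HilbertBasis ι ℝ E} (h : IsEigenbasis T e a) {Ω : Type*} [MeasurableSpace Ω]
    {P : Measure Ω} [IsProbabilityMeasure P] {v : Ω → E} (hv : ∀ x, ‖v x‖ = 1) (hg : 0 < g)
    (hgap : ∀ j, j ≠ o → g ≤ |a o - a j|) (hR : 0 ≤ R) (hsum : ∑' j, a j ≤ ‖T‖ * R)
    (hK : 1 ≤ ‖T‖ / g * √(R / n)) :
    |(∫ x, ⟪v x, e o⟫ ^ 2 ∂P) - 1 + biasCoeff a o / n| ≤ 2 * (‖T‖ / g * √(R / n)) ^ 3 := by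
  have hQ : biasCoeff a o / n ≤ (‖T‖ / g * √(R / n)) ^ 2 :=
    calc biasCoeff a o / n ≤ g⁻¹ ^ 2 * ‖T‖ * (‖T‖ * R) / n := by
          gcongr
          exact (h.biasCoeff_le hg hgap).trans (by gcongr)
      _ = (‖T‖ / g * √(R / n)) ^ 2 := by
          rw [mul_pow, Real.sq_sqrt (by positivity)]
          ring
  set K := ‖T‖ / g * √(R / n)
  have hQ₀ : 0 ≤ biasCoeff a o / n := div_nonneg (h.biasCoeff_nonneg o) n.cast_nonneg
  have hb := integral_inner_sq_le_one (P := P) (e.orthonormal.1 o) hv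
  have hb₀ : 0 ≤ ∫ x, ⟪v x, e o⟫ ^ 2 ∂P := integral_nonneg fun x => sq_nonneg _
  have hK₁ : 1 ≤ K ^ 3 := one_le_pow₀ hK
  have hK₂ : K ^ 2 ≤ K ^ 3 := pow_le_pow_right₀ hK (by norm_num)
  exact abs_le.2 ⟨by linarith, by linarith⟩

lemma IsGaussian.ae_forall_inner_eq_zero_of_tsum_lt {T : E →L[ℝ] E} {e : HilbertBasis ι ℝ E}
    [MeasurableSpace E] [BorelSpace E] {ν : Measure E} {est : (Fin n → E) → E}
    (hν : IsGaussian ν T) (h : IsEigenbasis T e a) (ho : 0 < a o) (hg : 0 ≤ g)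
    (hgap : ∀ j, j ≠ o → g ≤ |a o - a j|) (hsum : ∑' j, a j < n * g) (hest : Measurable est)
    (hnorm : ∀ x, ‖est x‖ = 1)
    (heigen : ∀ x, sampleCov x (est x) = lam (sampleCov x) {i | a o < a i}.ncard • est x) :
    ∀ᵐ x ∂ν, ∀ i, a i = 0 → ⟪x, e i⟫ = 0 := by
  by_cases hker : ∃ i, a i = 0
  · obtain ⟨i, hi⟩ := hker
    have hgo : g ≤ a o := by
      simpa [hi, abs_of_pos ho] using hgap i fun h' => ho.ne' (h' ▸ hi)
    have hfin : {i | a o < a i}.Finite :=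
      (h.finite_setOf_le ho).subset fun i (hi : a o < a i) => hi.le
    have hmem : ∀ j, j ∈ hfin.toFinset ↔ a o < a j := fun j => hfin.mem_toFinset
    have hoB : o ∉ hfin.toFinset := fun h' => ((hmem o).1 h').false
    have hcard := h.card_mul_le_tsum (s := .cons o hfin.toFinset hoB) (c := g) fun j hj => by
      rcases Finset.mem_cons.1 hj with rfl | hj
      exacts [hgo, hgo.trans ((hmem j).1 hj).le]
    rw [Finset.card_cons] at hcard
    have hlt : hfin.toFinset.card + 1 < n :=
      Nat.cast_lt.1 (lt_of_mul_lt_mul_right (hcard.trans_lt hsum) hg)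
    rw [Set.ncard_eq_toFinset_card _ hfin] at heigen
    exact hν.ae_forall_inner_eq_zero_of_measurable h ho.ne'
      (fun j hj => (ho.trans ((hmem j).1 hj)).ne') hoB hlt hest hnorm heigen
  · exact .of_forall fun x i hi => (hker ⟨i, hi⟩).elim

variable {T : H →L[ℝ] H} {e : HilbertBasis ι ℝ H} [MeasurableSpace H] [BorelSpace H]
  {ν : Measure H} {est : (Fin n → H) → H}

lemma IsGaussian.abs_integral_inner_sq_sub_one_add_le (hν : IsGaussian ν T)
    (h : IsEigenbasis T e a) (hnull : ∀ᵐ x ∂ν, ∀ i, a i = 0 → ⟪x, e i⟫ = 0) (hg : 0 < g)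
    (hgap : ∀ j, j ≠ o → g ≤ |a o - a j|) (hT : 0 < ‖T‖) (hR : 1 ≤ R) (hRn : R ≤ n)
    (hsum : ∑' j, a j ≤ ‖T‖ * R) (hest : Measurable est) (hnorm : ∀ x, ‖est x‖ = 1) {j : ℕ}
    (hj : lam T j = a o) (heigen : ∀ x, sampleCov x (est x) = lam (sampleCov x) j • est x) :
    |(∫ x, ⟪est x, e o⟫ ^ 2 ∂(Measure.pi fun _ => ν)) - 1 + biasCoeff a o / n| ≤
      32 * (288 * Real.exp 10) ^ 3 * (‖T‖ / g * √(R / n)) ^ 3 := by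
  have := hν.1
  have hn : n ≠ 0 := fun h₀ => by
    rw [h₀, Nat.cast_zero] at hRn
    linarith
  obtain ⟨C, hC, hCg, hCx⟩ := h.exists_isReducedResolvent hg hgap
  obtain ⟨hZ, hZ_sum⟩ := hν.integrable_and_hasSum_norm_sq_apply_sampleCov_sub h hnull hn
    (c := fun j => (a o - a j)⁻¹) (by rw [sub_self, inv_zero]) (abs_inv_sub_le hg hgap) hCx
  have hbias : biasCoeff a o / n =
      ∫ x, ‖C ((sampleCov x - T) (e o))‖ ^ 2 ∂(Measure.pi fun _ : Fin n => ν) := by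
    rw [← hZ_sum.tsum_eq, biasCoeff, ← tsum_div_const]
    exact tsum_congr fun j => mul_div_assoc _ _ _
  have hbound := abs_integral_sub_one_add_integral_le (c := 16 / g ^ 3)
    (integrable_inner_sq (e.orthonormal.1 o) hest hnorm) hZ (by positivity) (by positivity)
    (fun x => ?_) (hν.lintegral_opNorm_sampleCov_sub_pow_three_le h hnull hT h.apply_le_opNorm hR
      hRn hsum)
  · rw [hbias]
    exact hbound.trans_eq (by ring)
  · have hle := hC.abs_inner_sq_sub_one_add_le hg hCg (e.orthonormal.1 o) (hnorm x) (heigen x)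
      (hj ▸ abs_lam_sub_lam_le _ _ j)
    rw [real_inner_comm] at hle
    exact hle.trans_eq (by ring)

theorem IsGaussian.abs_integral_inner_sq_sub_one_add_le_of_gap (hν : IsGaussian ν T)
    (h : IsEigenbasis T e a) (ho : 0 < a o) (hg : 0 < g) (hgap : ∀ j, j ≠ o → g ≤ |a o - a j|)
    (hgT : g ≤ ‖T‖) (hn : n ≠ 0) (hR : 1 ≤ R) (hsum : ∑' j, a j ≤ ‖T‖ * R) (hest : Measurable est)
    (hnorm : ∀ x, ‖est x‖ = 1)
    (heigen : ∀ x, sampleCov x (est x) = lam (sampleCov x) {i | a o < a i}.ncard • est x) :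
    |(∫ x, ⟪est x, e o⟫ ^ 2 ∂(Measure.pi fun _ => ν)) - 1 + biasCoeff a o / n| ≤
      (32 * (288 * Real.exp 10) ^ 3 + 2) * (‖T‖ / g * √(R / n)) ^ 3 := by
  have := hν.1
  have hn' : (0 : ℝ) < n := Nat.cast_pos.2 hn.pos
  have hratio : 1 ≤ ‖T‖ / g := (one_le_div hg).2 hgT
  rcases le_or_gt 1 (‖T‖ / g * √(R / n)) with hK | hK
  · refine (h.abs_integral_inner_sq_sub_one_add_le_of_one_le hnorm hg hgap (by linarith) hsum
      hK).trans ?_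
    gcongr
    exact le_add_of_nonneg_left (by positivity)
  · have hK₂ : (‖T‖ / g) ^ 2 * (R / n) < 1 := by
      rw [← Real.sq_sqrt (show 0 ≤ R / n by positivity), ← mul_pow]
      exact pow_lt_one₀ (by positivity) hK two_ne_zero
    have hlt : ‖T‖ / g * (R / n) < 1 :=
      (mul_le_mul_of_nonneg_right (le_self_pow₀ hratio two_ne_zero) (by positivity)).trans_lt hK₂
    have hRn : R / n < 1 := (le_mul_of_one_le_left (by positivity) hratio).trans_lt hlt
    rw [div_mul_div_comm, div_lt_one (by positivity), mul_comm g] at hlt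
    have hnull := hν.ae_forall_inner_eq_zero_of_tsum_lt h ho hg.le hgap (hsum.trans_lt hlt) hest
      hnorm heigen
    refine (hν.abs_integral_inner_sq_sub_one_add_le h hnull hg hgap (hg.trans_le hgT) hR
      ((div_lt_one hn').1 hRn).le hsum hest hnorm ((h.lam_eq_iff ho hg hgap).2 rfl) heigen).trans ?_
    gcongr
    exact le_add_of_nonneg_right zero_le_two

end Bias

section Subsingleton

variable {ι : Type*} [Subsingleton ι]

lemma biasCoeff_of_subsingleton (a : ι → ℝ) (o : ι) : biasCoeff a o = 0 := by
  have hterm : ∀ j, (a o - a j)⁻¹ ^ 2 * (a j * a o) = 0 := fun j => by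
    rw [Subsingleton.elim j o, sub_self, inv_zero, zero_pow two_ne_zero, zero_mul]
  rw [biasCoeff, tsum_congr hterm, tsum_zero]

lemma inner_sq_eq_norm_sq_of_subsingleton (e : HilbertBasis ι ℝ E) (o : ι) (x : E) :
    ⟪x, e o⟫ ^ 2 = ‖x‖ ^ 2 := by
  have hsum := hasSum_single (f := fun i => ⟪e i, x⟫ ^ 2) o fun j hj =>
    (hj (Subsingleton.elim j o)).elim
  rw [real_inner_comm, hsum.unique (hasSum_inner_sq e x)]

end Subsingleton

section Selection

variable {ι : Type*} {e : HilbertBasis ι ℝ H} {a : ι → ℝ} {o : ι} {S : CovOp H} {r n : ℕ} {θ : H}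
  {est : (Fin n → H) → H}

lemma eigSel.sampleCov_apply (hsel : eigSel S r θ est) (h : IsEigenbasis S.toCLM e a)
    (hoμ : a o = S.μ r) {g : ℝ} (hg : 0 < g) (hgap : ∀ j, j ≠ o → g ≤ |a o - a j|)
    (x : Fin n → H) :
    sampleCov x (est x) = lam (sampleCov x) {i | a o < a i}.ncard • est x := by
  have ho : 0 < a o := hoμ ▸ S.μ_pos r
  have hDelta : ∀ j, j ∈ S.Delta r ↔ j = {i | a o < a i}.ncard := fun j => by
    rw [← h.lam_eq_iff ho hg hgap, hoμ]
    rfl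
  have hlam := (h.lam_eq_iff ho hg hgap).2 rfl
  obtain ⟨V, hV⟩ := exists_finrank_eq_of_lam_ne_zero (hlam.trans_ne ho.ne')
  obtain ⟨v, hv, hxv⟩ := exists_eigenvector_lam_sampleCov x hV
  obtain ⟨j, hj, hest⟩ := (hsel x).2.2 ⟨v, hv, _, (hDelta _).2 rfl, hxv⟩
  rwa [(hDelta j).1 hj] at hest

variable [MeasurableSpace H] [BorelSpace H] {ν : Measure H}

theorem stmt14_general (hθ : S.SimpleVec r θ) (hν : IsGaussian ν S.toCLM)
    (hsel : eigSel S r θ est) (hest : Measurable est) (hn : n ≠ 0) :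
    |biasParam ν θ est + S.Ar r / (2 * n)| ≤
      (32 * (288 * Real.exp 10) ^ 3 + 2) * (‖S.toCLM‖ ^ 3 / S.g r ^ 3) * √(S.effRank / n) ^ 3 := by
  have := hν.1
  obtain ⟨ι, e, a, o, h, hoμ, hne, hoθ, htrace, hAr⟩ := hθ.exists_isEigenbasis
  have ho : 0 < a o := hoμ ▸ S.μ_pos r
  have hT : 0 < ‖S.toCLM‖ := ho.trans_le (h.apply_le_opNorm o)
  have hg : S.g r = Metric.infDist (a o) (spectrum ℝ S.toCLM \ {a o}) := by
    rw [hoμ]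
    rfl
  have hbias : biasParam ν θ est + S.Ar r / (2 * n) =
      (∫ x, ⟪est x, e o⟫ ^ 2 ∂(Measure.pi fun _ => ν)) - 1 + biasCoeff a o / n := by
    simp only [biasParam, hoθ, hAr, div_div]
  have hnorm : ∀ x, ‖est x‖ = 1 := fun x => (hsel x).1
  rw [hbias]
  rcases subsingleton_or_nontrivial ι with _ | _
  · have hg₀ : 0 ≤ S.g r := Metric.infDist_nonneg
    simp only [inner_sq_eq_norm_sq_of_subsingleton, hnorm, biasCoeff_of_subsingleton, one_pow,
      integral_const, probReal_univ, one_smul, sub_self, zero_div, add_zero, abs_zero]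
    positivity
  · obtain ⟨j, hj⟩ := exists_ne o
    have hg_pos : 0 < S.g r := hg ▸ h.infDist_pos ho hne hj
    have hgap : ∀ j, j ≠ o → S.g r ≤ |a o - a j| := fun j hj =>
      hg.trans_le (h.infDist_le_abs_sub (hne j hj))
    have hR : ∑' j, a j = ‖S.toCLM‖ * S.effRank := by
      rw [htrace, CovOp.effRank, mul_div_cancel₀ _ hT.ne']
    have hR₁ : 1 ≤ S.effRank :=
      le_of_mul_le_mul_left (by rw [mul_one, ← hR]; exact h.opNorm_le_tsum) hT
    have hle := hν.abs_integral_inner_sq_sub_one_add_le_of_gap h ho hg_pos hgap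
      ((hgap j hj).trans (h.abs_sub_le_opNorm o j)) hn hR₁ hR.le hest hnorm
      (hsel.sampleCov_apply h hoμ hg_pos hgap)
    exact hle.trans_eq (by ring)

end Selection

/-- **Lemma 4.10.** `b_r(Σ) = -A_r(Σ)/(2n) + β_r` with
`|β_r| ≤ C (‖Σ‖³/g_r³)(√(r(Σ)/n) ∨ r(Σ)/n)³`. -/
theorem stmt14 :
    ∃ C : ℝ, 0 < C ∧
      ∀ (H : Type) (_ : NormedAddCommGroup H),
        ∀ (_ : InnerProductSpace ℝ H) (_ : CompleteSpace H)
          (_ : MeasurableSpace H) (_ : BorelSpace H)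
          (S : CovOp H) (r : ℕ) (θ : H) (ν : Measure H) (n : ℕ)
          (est : (Fin n → H) → H),
          S.SimpleVec r θ → IsGaussian ν S.toCLM → eigSel S r θ est →
          Measurable est → 1 ≤ n →
          |biasParam ν θ est + S.Ar r / (2 * n)| ≤
            C * (‖S.toCLM‖ ^ 3 / S.g r ^ 3) *
              max (Real.sqrt (S.effRank / n)) (S.effRank / n) ^ 3 := by
  refine ⟨32 * (288 * Real.exp 10) ^ 3 + 2, by positivity, ?_⟩
  intro H _ _ _ _ _ S r θ ν n est hθ hν hsel hest hn
  have hg : 0 ≤ S.g r := Metric.infDist_nonneg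
  refine (stmt14_general hθ hν hsel hest (Nat.one_le_iff_ne_zero.1 hn)).trans ?_
  gcongr
  exact le_max_left _ _

end KLN
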